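/- arXiv:2101.04634 — 6 statements merged into one kernel-verified Lean document; each statement's English description precedes it below -/
import Mathlib

section
/- There exists a universal constant C > 0 such that for all integers ℓ ≥ 1 and k ≥ 1, with D = 2^ℓ, and for all D×D complex unitary matrices Y and V, the two probability distributions on ({1,...,D})^k defined by P_k(x_1,...,x_k) = ∏_{i=1}^k ∫_{U(D)} |(Y U V)_{x_i,0}|² dU and Q_k(x_1,...,x_k) = ∫_{U(D)} ∏_{i=1}^k |(Y U V)_{x_i,0}|² dU satisfy the total-variation bound ∑_{x ∈ ({1,...,D})^k} |P_k(x) − Q_k(x)| ≤ C · k² · 2^{−ℓ/4}. -/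
open MeasureTheory Matrix

noncomputable instance {m n : Type*} : MeasurableSpace (Matrix m n ℂ) :=
  inferInstanceAs (MeasurableSpace (m → n → ℂ))

theorem sum_abs_sub_le_of_const_on {X : Type*} [Fintype X] [DecidableEq X] (P Q : X → ℝ)
    (hP : ∀ x, 0 ≤ P x) (hQ : ∀ x, 0 ≤ Q x) (hPs : ∑ x, P x = 1) (hQs : ∑ x, Q x = 1)
    (N : Finset X) (hN : ∀ x ∈ N, ∀ y ∈ N, P x - Q x = P y - Q y) :
    ∑ x, |P x - Q x| ≤ 2 * (∑ x ∈ Nᶜ, P x + ∑ x ∈ Nᶜ, Q x) := by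
  have hPc := Finset.sum_add_sum_compl N P
  have hQc := Finset.sum_add_sum_compl N Q
  have hN' : ∑ x ∈ N, |P x - Q x| = |∑ x ∈ N, (P x - Q x)| := by
    rcases N.eq_empty_or_nonempty with rfl | ⟨y, hy⟩
    · simp
    · rw [Finset.sum_congr rfl fun x hx => hN x hx y hy,
        Finset.sum_congr rfl fun x hx => congrArg abs (hN x hx y hy)]
      simp [abs_mul, ← mul_sub]
  have hPn : 0 ≤ ∑ x ∈ Nᶜ, P x := Finset.sum_nonneg fun x _ => hP x
  have hQn : 0 ≤ ∑ x ∈ Nᶜ, Q x := Finset.sum_nonneg fun x _ => hQ x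
  have hsum : ∑ x ∈ N, |P x - Q x| ≤ ∑ x ∈ Nᶜ, P x + ∑ x ∈ Nᶜ, Q x := by
    rw [hN', Finset.sum_sub_distrib, abs_le]
    constructor <;> linarith
  have hcompl : ∑ x ∈ Nᶜ, |P x - Q x| ≤ ∑ x ∈ Nᶜ, P x + ∑ x ∈ Nᶜ, Q x := by
    rw [← Finset.sum_add_distrib]
    refine Finset.sum_le_sum fun x _ => abs_le.2 ⟨?_, ?_⟩ <;> linarith [hP x, hQ x]
  rw [← Finset.sum_add_sum_compl N]
  linarith

theorem sum_prod_collision {ι κ : Type*} [Fintype ι] [DecidableEq ι] [Fintype κ] [DecidableEq κ]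
    (p : ι → ℝ) (hp : ∑ a, p a = 1) {i j : κ} (hij : i ≠ j) :
    ∑ x : κ → ι with x i = x j, ∏ l, p (x l) = ∑ a, p a ^ 2 := by
  have hfactor (a : ι) (x : κ → ι) :
      (∏ l, p (x l) * if l = i ∨ l = j then (if x l = a then 1 else 0) else 1)
        = if x i = a then (if x j = a then ∏ l, p (x l) else 0) else 0 := by
    split_ifs with hi hj
    · refine Finset.prod_congr rfl fun l _ => ?_
      by_cases h : l = i ∨ l = j
      · rcases h with rfl | rfl <;> simp [*]
      · simp [h]
    · exact Finset.prod_eq_zero (Finset.mem_univ j) (by simp [hj])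
    · exact Finset.prod_eq_zero (Finset.mem_univ i) (by simp [hi])
  have hsum (a : ι) :
      ∑ x : κ → ι, (∏ l, p (x l) * if l = i ∨ l = j then (if x l = a then 1 else 0) else 1)
        = p a ^ 2 := by
    rw [← Fintype.prod_sum
      (f := fun l y => p y * if l = i ∨ l = j then (if y = a then 1 else 0) else 1)]
    have (l : κ) : (∑ y, p y * if l = i ∨ l = j then (if y = a then (1 : ℝ) else 0) else 1)
        = if l ∈ ({i, j} : Finset κ) then p a else 1 := by
      by_cases h : l = i ∨ l = j <;> simp [h, hp]
    simp_rw [this]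
    rw [Finset.prod_ite_mem]
    simp [hij]
  simp_rw [← hsum, hfactor]
  rw [Finset.sum_comm, Finset.sum_filter]
  refine Finset.sum_congr rfl fun x _ => ?_
  simp [eq_comm]

theorem sum_prod_not_injective_le {ι : Type*} [Fintype ι] [DecidableEq ι] {k : ℕ}
    (p : ι → ℝ) (hp0 : ∀ a, 0 ≤ p a) (hp : ∑ a, p a = 1) :
    ∑ x : Fin k → ι with ¬ Function.Injective x, ∏ l, p (x l) ≤ (k : ℝ) ^ 2 * ∑ a, p a ^ 2 := by
  have hprod (x : Fin k → ι) : 0 ≤ ∏ l, p (x l) := Finset.prod_nonneg fun l _ => hp0 _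
  calc _ ≤ ∑ q ∈ (Finset.univ : Finset (Fin k)).offDiag,
        ∑ x : Fin k → ι with x q.1 = x q.2, ∏ l, p (x l) := by
        simp_rw [Finset.sum_filter]
        rw [Finset.sum_comm]
        refine Finset.sum_le_sum fun x _ => ?_
        have hnonneg (q : Fin k × Fin k) : 0 ≤ if x q.1 = x q.2 then ∏ l, p (x l) else 0 := by
          split_ifs <;> simp [hprod]
        split_ifs with hx
        · exact Finset.sum_nonneg fun q _ => hnonneg q
        · obtain ⟨a, b, hab, hne⟩ : ∃ a b, x a = x b ∧ a ≠ b := by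
            simpa [Function.Injective] using hx
          refine le_trans ?_ (Finset.single_le_sum (fun q _ => hnonneg q)
            (show (a, b) ∈ _ from by simpa using hne))
          simp [hab]
    _ = ((Finset.univ : Finset (Fin k)).offDiag.card : ℝ) * ∑ a, p a ^ 2 := by
        rw [Finset.sum_congr rfl fun q hq =>
          sum_prod_collision p hp (Finset.mem_offDiag.1 hq).2.2]
        simp
    _ ≤ _ := by
        gcongr
        rw [Finset.offDiag_card, Finset.card_univ, Fintype.card_fin, sq]
        exact_mod_cast Nat.sub_le _ _

theorem norm_add_pow_four_add_norm_sub_pow_four_le (u v : ℂ) :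
    ‖u + v‖ ^ 4 + ‖u - v‖ ^ 4 ≤ 2 * ‖u‖ ^ 4 + 2 * ‖v‖ ^ 4 + 12 * (‖u‖ ^ 2 * ‖v‖ ^ 2) := by
  have h (z : ℂ) : ‖z‖ ^ 4 = (z.re ^ 2 + z.im ^ 2) ^ 2 := by
    rw [show ‖z‖ ^ 4 = (‖z‖ ^ 2) ^ 2 by ring, Complex.sq_norm, Complex.normSq_apply]; ring
  have h2 (z : ℂ) : ‖z‖ ^ 2 = (z.re ^ 2 + z.im ^ 2) := by
    rw [Complex.sq_norm, Complex.normSq_apply]; ring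
  simp only [h, h2, Complex.add_re, Complex.add_im, Complex.sub_re, Complex.sub_im]
  nlinarith [sq_nonneg (u.re * v.im - u.im * v.re)]


theorem exists_perm_comp_eq {κ ι : Type*} [Fintype ι] [DecidableEq ι]
    {x y : κ → ι} (hx : Function.Injective x) (hy : Function.Injective y) :
    ∃ σ : Equiv.Perm ι, ∀ i, σ (x i) = y i := by
  classical
  let e : {a // a ∈ Set.range x} ≃ {a // a ∈ Set.range y} :=
    (Equiv.ofInjective x hx).symm.trans (Equiv.ofInjective y hy)
  refine ⟨e.extendSubtype, fun i => ?_⟩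
  rw [e.extendSubtype_apply_of_mem (x i) ⟨i, rfl⟩]
  have : (Equiv.ofInjective x hx).symm ⟨x i, i, rfl⟩ = i := by
    rw [Equiv.symm_apply_eq]; rfl
  simp [e, this]

theorem permMatrix_mem_unitaryGroup {ι : Type*} [Fintype ι] [DecidableEq ι] (σ : Equiv.Perm ι) :
    σ.permMatrix ℂ ∈ unitaryGroup ι ℂ := by
  rw [mem_unitaryGroup_iff, star_eq_conjTranspose, conjTranspose_permMatrix, ← permMatrix_mul]
  simp

/-- The unitary matrix acting as the Hadamard gate on coordinates `i`, `j`. -/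
noncomputable def hadamardPair {ι : Type*} [DecidableEq ι] (i j : ι) : Matrix ι ι ℂ :=
  1 + single i i ((√2 : ℂ)⁻¹ - 1) + single i j (√2 : ℂ)⁻¹ + single j i (√2 : ℂ)⁻¹
    - single j j ((√2 : ℂ)⁻¹ + 1)

theorem hadamardPair_mem_unitaryGroup {ι : Type*} [Fintype ι] [DecidableEq ι] {i j : ι}
    (hij : i ≠ j) : hadamardPair i j ∈ unitaryGroup ι ℂ := by
  have hs : ((√2 : ℂ)⁻¹) ^ 2 = 1 / 2 := by
    rw [inv_pow, ← Complex.ofReal_pow, Real.sq_sqrt (by norm_num)]; norm_num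
  have hstar : star (hadamardPair i j) = hadamardPair i j := by
    simp [hadamardPair, star_eq_conjTranspose]
    abel
  rw [mem_unitaryGroup_iff, hstar]
  generalize hsdef : (√2 : ℂ)⁻¹ = s at hs
  simp only [hadamardPair, hsdef]
  simp only [mul_add, add_mul, mul_sub, sub_mul, mul_one, one_mul, single_mul_single_same,
    Matrix.single_mul_single_of_ne _ _ _ _ hij, Matrix.single_mul_single_of_ne _ _ _ _ hij.symm]
  ext a b
  simp only [Matrix.add_apply, Matrix.sub_apply, single_apply, Matrix.zero_apply, one_apply]
  split_ifs <;> grind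

theorem hadamardPair_mulVec_left {ι : Type*} [Fintype ι] [DecidableEq ι] {i j : ι}
    (hij : i ≠ j) (v : ι → ℂ) : (hadamardPair i j *ᵥ v) i = (√2 : ℂ)⁻¹ * (v i + v j) := by
  simp [hadamardPair, add_mulVec, sub_mulVec, single_mulVec, hij]
  ring

theorem hadamardPair_mulVec_right {ι : Type*} [Fintype ι] [DecidableEq ι] {i j : ι}
    (hij : i ≠ j) (v : ι → ℂ) : (hadamardPair i j *ᵥ v) j = (√2 : ℂ)⁻¹ * (v i - v j) := by
  simp [hadamardPair, add_mulVec, sub_mulVec, single_mulVec, hij.symm]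
  ring

/-- The law of the random vector `w` is invariant under unitary matrices. -/
def IsUnitarilyInvariant {Ω ι : Type*} [MeasurableSpace Ω] [Fintype ι] [DecidableEq ι]
    (μ : Measure Ω) (w : Ω → ι → ℂ) : Prop :=
  ∀ W ∈ unitaryGroup ι ℂ, ∀ g : (ι → ℂ) → ℝ, ∫ ω, g (W *ᵥ w ω) ∂μ = ∫ ω, g (w ω) ∂μ

theorem IsUnitarilyInvariant.integral_prod_perm {Ω ι : Type*} [MeasurableSpace Ω] [Fintype ι]
    [DecidableEq ι] {μ : Measure Ω} {w : Ω → ι → ℂ} (hinv : IsUnitarilyInvariant μ w)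
    {κ : Type*} [Fintype κ] (σ : Equiv.Perm ι) (x : κ → ι) :
    ∫ ω, ∏ i, ‖w ω (σ (x i))‖ ^ 2 ∂μ = ∫ ω, ∏ i, ‖w ω (x i)‖ ^ 2 ∂μ := by
  simpa [permMatrix_mulVec] using
    hinv _ (permMatrix_mem_unitaryGroup σ) fun v => ∏ i, ‖v (x i)‖ ^ 2

theorem norm_sq_le_one_of_sum_eq_one {ι : Type*} [Fintype ι] {v : ι → ℂ}
    (hv : ∑ a, ‖v a‖ ^ 2 = 1) (a : ι) : ‖v a‖ ^ 2 ≤ 1 :=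
  hv ▸ Finset.single_le_sum (f := fun a => ‖v a‖ ^ 2) (fun _ _ => sq_nonneg _) (Finset.mem_univ a)

section UnitVector

variable {Ω ι : Type*} [MeasurableSpace Ω] [Fintype ι] {μ : Measure Ω}
  [IsProbabilityMeasure μ] {w : Ω → ι → ℂ}

theorem integrable_prod_norm_sq (hw : Measurable w) (hnorm : ∀ ω, ∑ a, ‖w ω a‖ ^ 2 = 1)
    {κ : Type*} [Fintype κ] (x : κ → ι) : Integrable (fun ω => ∏ i, ‖w ω (x i)‖ ^ 2) μ := by
  refine Integrable.of_bound (Measurable.aestronglyMeasurable (by fun_prop)) 1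
    (Filter.Eventually.of_forall fun ω => ?_)
  rw [Real.norm_of_nonneg (Finset.prod_nonneg fun _ _ => sq_nonneg _)]
  exact Finset.prod_le_one (fun _ _ => sq_nonneg _)
    fun i _ => norm_sq_le_one_of_sum_eq_one (hnorm ω) _

theorem integrable_norm_sq (hw : Measurable w) (hnorm : ∀ ω, ∑ a, ‖w ω a‖ ^ 2 = 1) (a : ι) :
    Integrable (fun ω => ‖w ω a‖ ^ 2) μ := by
  simpa using integrable_prod_norm_sq (μ := μ) hw hnorm ![a]

theorem integrable_norm_sq_mul (hw : Measurable w) (hnorm : ∀ ω, ∑ a, ‖w ω a‖ ^ 2 = 1)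
    (a b : ι) : Integrable (fun ω => ‖w ω a‖ ^ 2 * ‖w ω b‖ ^ 2) μ := by
  simpa using integrable_prod_norm_sq (μ := μ) hw hnorm ![a, b]

theorem integrable_norm_pow_four (hw : Measurable w) (hnorm : ∀ ω, ∑ a, ‖w ω a‖ ^ 2 = 1)
    (a : ι) : Integrable (fun ω => ‖w ω a‖ ^ 4) μ := by
  simpa [← pow_add] using integrable_norm_sq_mul (μ := μ) hw hnorm a a

variable [DecidableEq ι]

theorem IsUnitarilyInvariant.integral_norm_sq (hinv : IsUnitarilyInvariant μ w)
    (hw : Measurable w) (hnorm : ∀ ω, ∑ a, ‖w ω a‖ ^ 2 = 1) (a : ι) :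
    ∫ ω, ‖w ω a‖ ^ 2 ∂μ = (Fintype.card ι : ℝ)⁻¹ := by
  have hconst (b : ι) : ∫ ω, ‖w ω b‖ ^ 2 ∂μ = ∫ ω, ‖w ω a‖ ^ 2 ∂μ := by
    simpa using hinv.integral_prod_perm (Equiv.swap a b) ![a]
  have hsum : ∑ b, ∫ ω, ‖w ω b‖ ^ 2 ∂μ = 1 := by
    rw [← integral_finsetSum _ fun b _ => integrable_norm_sq hw hnorm b]
    simp [hnorm]
  rw [Finset.sum_congr rfl fun b _ => hconst b] at hsum
  rw [Finset.sum_const, nsmul_eq_mul, Finset.card_univ] at hsum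
  exact eq_inv_of_mul_eq_one_right hsum

theorem IsUnitarilyInvariant.integral_norm_pow_four_add_le (hinv : IsUnitarilyInvariant μ w)
    (hw : Measurable w) (hnorm : ∀ ω, ∑ a, ‖w ω a‖ ^ 2 = 1) (i j : ι) :
    ∫ ω, ‖w ω i‖ ^ 4 ∂μ + ∫ ω, ‖w ω j‖ ^ 4 ∂μ ≤ 6 * ∫ ω, ‖w ω i‖ ^ 2 * ‖w ω j‖ ^ 2 ∂μ := by
  have h4 := integrable_norm_pow_four (μ := μ) hw hnorm
  rcases eq_or_ne i j with rfl | hij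
  · have hnonneg : 0 ≤ ∫ ω, ‖w ω i‖ ^ 4 ∂μ := integral_nonneg fun ω => by positivity
    simp_rw [← pow_add]
    norm_num
    linarith
  have h := hinv _ (hadamardPair_mem_unitaryGroup hij) fun v => ‖v i‖ ^ 4 + ‖v j‖ ^ 4
  have hsqrt : (√2 : ℝ) ^ 4 = 4 := by
    rw [show (√2 : ℝ) ^ 4 = (√2 ^ 2) ^ 2 by ring, Real.sq_sqrt (by norm_num)]; norm_num
  simp only [hadamardPair_mulVec_left hij, hadamardPair_mulVec_right hij, norm_mul, mul_pow,
    norm_inv, Complex.norm_real, Real.norm_of_nonneg (Real.sqrt_nonneg 2), inv_pow, hsqrt,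
    ← mul_add] at h
  have hle : ∫ ω, (4 : ℝ)⁻¹ * (‖w ω i + w ω j‖ ^ 4 + ‖w ω i - w ω j‖ ^ 4) ∂μ
      ≤ ∫ ω, (2⁻¹ * (‖w ω i‖ ^ 4 + ‖w ω j‖ ^ 4) + 3 * (‖w ω i‖ ^ 2 * ‖w ω j‖ ^ 2)) ∂μ := by
    refine integral_mono_of_nonneg (Filter.Eventually.of_forall fun ω => by positivity) ?_
      (Filter.Eventually.of_forall fun ω => ?_)
    · exact (((h4 i).add (h4 j)).const_mul _).add
        ((integrable_norm_sq_mul hw hnorm i j).const_mul _)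
    · have := norm_add_pow_four_add_norm_sub_pow_four_le (w ω i) (w ω j)
      dsimp only
      linarith
  rw [h, integral_add (((h4 i).fun_add (h4 j)).const_mul _)
    ((integrable_norm_sq_mul hw hnorm i j).const_mul _), integral_const_mul, integral_const_mul,
    integral_add (h4 i) (h4 j)] at hle
  linarith

theorem IsUnitarilyInvariant.sum_integral_norm_pow_four_le [Nonempty ι]
    (hinv : IsUnitarilyInvariant μ w) (hw : Measurable w)
    (hnorm : ∀ ω, ∑ a, ‖w ω a‖ ^ 2 = 1) :
    ∑ a, ∫ ω, ‖w ω a‖ ^ 4 ∂μ ≤ 3 * (Fintype.card ι : ℝ)⁻¹ := by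
  have hle := Finset.sum_le_sum fun i (_ : i ∈ Finset.univ) =>
    Finset.sum_le_sum fun j (_ : j ∈ Finset.univ) =>
      hinv.integral_norm_pow_four_add_le hw hnorm i j
  have hone : ∑ i, ∑ j, ∫ ω, ‖w ω i‖ ^ 2 * ‖w ω j‖ ^ 2 ∂μ = 1 := by
    simp_rw [← integral_finsetSum _ fun j _ => integrable_norm_sq_mul hw hnorm _ j,
      ← Finset.mul_sum, hnorm, mul_one]
    rw [← integral_finsetSum _ fun b _ => integrable_norm_sq hw hnorm b]
    simp [hnorm]
  simp_rw [← Finset.mul_sum, hone, Finset.sum_add_distrib] at hle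
  simp only [Finset.sum_const, Finset.card_univ, nsmul_eq_mul, ← Finset.mul_sum] at hle
  have hcard : (0 : ℝ) < Fintype.card ι := by exact_mod_cast Fintype.card_pos
  rw [← div_eq_mul_inv, le_div_iff₀ hcard]
  linarith

theorem IsUnitarilyInvariant.sum_abs_prod_integral_sub_integral_prod_le [Nonempty ι]
    (hinv : IsUnitarilyInvariant μ w) (hw : Measurable w)
    (hnorm : ∀ ω, ∑ a, ‖w ω a‖ ^ 2 = 1) (k : ℕ) :
    ∑ x : Fin k → ι, |∏ i, ∫ ω, ‖w ω (x i)‖ ^ 2 ∂μ - ∫ ω, ∏ i, ‖w ω (x i)‖ ^ 2 ∂μ|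
      ≤ 8 * (k : ℝ) ^ 2 * (Fintype.card ι : ℝ)⁻¹ := by
  have hint := integrable_prod_norm_sq (μ := μ) (κ := Fin k) hw hnorm
  have hcard : (Fintype.card ι : ℝ) ≠ 0 := by exact_mod_cast Fintype.card_ne_zero
  set p : ι → ℝ := fun a => ∫ ω, ‖w ω a‖ ^ 2 ∂μ with hp
  have hpa (a : ι) : p a = (Fintype.card ι : ℝ)⁻¹ := hinv.integral_norm_sq hw hnorm a
  have hp0 (a : ι) : 0 ≤ p a := by rw [hpa]; positivity
  have hp1 : ∑ a, p a = 1 := by simp [hpa, hcard]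
  have hp2 : ∑ a, p a ^ 2 = (Fintype.card ι : ℝ)⁻¹ := by
    simp only [hpa, Finset.sum_const, Finset.card_univ, nsmul_eq_mul]; field_simp
  have hprodsum (q : ι → ℝ) (hq : ∑ a, q a = 1) : ∑ x : Fin k → ι, ∏ i, q (x i) = 1 := by
    rw [← Fintype.prod_sum (f := fun _ => q)]; simp [hq]
  have hbound := sum_abs_sub_le_of_const_on (fun x : Fin k → ι => ∏ i, p (x i))
    (fun x => ∫ ω, ∏ i, ‖w ω (x i)‖ ^ 2 ∂μ) (fun x => Finset.prod_nonneg fun i _ => hp0 _)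
    (fun x => integral_nonneg fun ω => Finset.prod_nonneg fun i _ => sq_nonneg _)
    (hprodsum p hp1)
    (by rw [← integral_finsetSum _ fun x _ => hint x]; simp [hprodsum _ (hnorm _)])
    (Finset.univ.filter Function.Injective) (by
      intro x hx y hy
      obtain ⟨σ, hσ⟩ := exists_perm_comp_eq (Finset.mem_filter.1 hx).2 (Finset.mem_filter.1 hy).2
      simp_rw [← hσ, hpa, hinv.integral_prod_perm])
  rw [Finset.compl_filter] at hbound
  have hP := sum_prod_not_injective_le (k := k) p hp0 hp1
  have hQ : ∑ x : Fin k → ι with ¬ Function.Injective x, ∫ ω, ∏ i, ‖w ω (x i)‖ ^ 2 ∂μ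
      ≤ (k : ℝ) ^ 2 * (3 * (Fintype.card ι : ℝ)⁻¹) := by
    rw [← integral_finsetSum _ fun x _ => hint x]
    calc _ ≤ ∫ ω, (k : ℝ) ^ 2 * ∑ a, ‖w ω a‖ ^ 4 ∂μ := by
          refine integral_mono (integrable_finsetSum _ fun x _ => hint x)
            ((integrable_finsetSum _ fun a _ =>
              integrable_norm_pow_four hw hnorm a).const_mul _) fun ω => ?_
          have := sum_prod_not_injective_le (k := k) (fun a => ‖w ω a‖ ^ 2)
            (fun _ => sq_nonneg _) (hnorm ω)
          simpa only [← pow_mul] using this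
      _ ≤ _ := by
          rw [integral_const_mul,
            integral_finsetSum _ fun a _ => integrable_norm_pow_four hw hnorm a]
          gcongr
          exact hinv.sum_integral_norm_pow_four_le hw hnorm
  rw [hp2] at hP
  linarith

end UnitVector

theorem sum_norm_sq_col_eq_one {ι : Type*} [Fintype ι] [DecidableEq ι] {U : Matrix ι ι ℂ}
    (hU : U ∈ unitaryGroup ι ℂ) (j : ι) : ∑ a, ‖U a j‖ ^ 2 = 1 := by
  have h := congrFun (congrFun (mem_unitaryGroup_iff'.1 hU) j) j
  simp only [mul_apply, star_apply, one_apply_eq, RCLike.star_def, RCLike.conj_mul] at h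
  rw [← Complex.ofReal_inj]
  push_cast
  exact h

/-- There is a universal constant `C > 0` such that for all `ℓ, k ≥ 1`,
with `D = 2^ℓ`, for all `D×D` unitaries `Y, V` and the Haar probability measure `μ` on `U(D)`,
the total variation distance between `P_k` (product of individual Haar integrals) and
`Q_k` (Haar integral of the product) is at most `C · k² · 2^{−ℓ/4}`. -/
theorem fixed_vs_fresh_unitary_tvd_parallel :
    ∃ C : ℝ, 0 < C ∧
      ∀ (ℓ k : ℕ), 1 ≤ ℓ → 1 ≤ k →
      ∀ (Y V : ↥(Matrix.unitaryGroup (Fin (2 ^ ℓ)) ℂ))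
        (μ : Measure ↥(Matrix.unitaryGroup (Fin (2 ^ ℓ)) ℂ)),
        μ.IsHaarMeasure → IsProbabilityMeasure μ →
        ∑ x : Fin k → Fin (2 ^ ℓ),
          |(∏ i : Fin k, ∫ U, ‖(Y * U * V).1 (x i) 0‖ ^ 2 ∂μ)
            - ∫ U, ∏ i : Fin k, ‖(Y * U * V).1 (x i) 0‖ ^ 2 ∂μ|
          ≤ C * (k : ℝ) ^ 2 * (2 : ℝ) ^ (-(ℓ : ℝ) / 4) := by
  refine ⟨8, by norm_num, fun ℓ k _ _ Y V μ hμ hμ' => ?_⟩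
  have : BorelSpace (Matrix (Fin (2 ^ ℓ)) (Fin (2 ^ ℓ)) ℂ) :=
    inferInstanceAs (BorelSpace (Fin (2 ^ ℓ) → Fin (2 ^ ℓ) → ℂ))
  set w : unitaryGroup (Fin (2 ^ ℓ)) ℂ → Fin (2 ^ ℓ) → ℂ := fun U a => (Y * U * V).1 a 0 with hw
  have hmeas : Measurable w := by
    refine Continuous.measurable (continuous_pi fun a => ?_)
    have : Continuous fun U : unitaryGroup (Fin (2 ^ ℓ)) ℂ => (Y * U * V).1 := by fun_prop
    exact this.matrix_elem a 0
  have hinv : IsUnitarilyInvariant μ w := by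
    intro W hW g
    rw [← integral_mul_left_eq_self (fun U => g (w U)) (Y⁻¹ * ⟨W, hW⟩ * Y)]
    congr! with U
    rw [hw]
    simp only [mul_assoc, mul_inv_cancel_left]
    rfl
  have h := hinv.sum_abs_prod_integral_sub_integral_prod_le hmeas
    (fun U => sum_norm_sq_col_eq_one (Y * U * V).2 0) k
  refine h.trans ?_
  gcongr
  rw [Fintype.card_fin, Nat.cast_pow, Nat.cast_ofNat, ← Real.rpow_natCast,
    ← Real.rpow_neg (by norm_num)]
  exact Real.rpow_le_rpow_of_exponent_le (by norm_num) (by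
    have : (0 : ℝ) ≤ ℓ := Nat.cast_nonneg ℓ
    linarith)
end

section
/- There exist universal constants c, C > 0 such that for every integer D ≥ 2 and all D×D complex unitary matrices Y and V, the Haar probability of the set of unitaries U ∈ U(D) for which there exists some x ∈ {1,...,D} with |(Y U V)_{x,0}|² ≥ D^{−1/4} is at most C · D · exp(−c·√D). -/
open MeasureTheory Matrix

/-- Every unit vector occurs as a prescribed row of some unitary matrix. -/
lemma exists_unitary_row_eq {ι : Type*} [Fintype ι] [DecidableEq ι] (x : ι)
    (w : EuclideanSpace ℂ ι) (hw : ‖w‖ = 1) :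
    ∃ W : ↥(Matrix.unitaryGroup ι ℂ), ∀ j, W.1 x j = w j := by
  have hv : Orthonormal ℂ (({x} : Set ι).domRestrict fun _ => w) := by
    refine ⟨fun _ => hw, fun i j hij => absurd (Subsingleton.elim i j) hij⟩
  obtain ⟨b, hb⟩ := hv.exists_orthonormalBasis_extension_of_card_eq (by simp)
  refine ⟨⟨Matrix.of fun i j => b i j, ?_⟩, fun j => ?_⟩
  · rw [Matrix.mem_unitaryGroup_iff]
    ext i k
    have h := orthonormal_iff_ite.1 b.orthonormal k i
    simp only [PiLp.inner_apply, RCLike.inner_apply] at h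
    simp only [Matrix.mul_apply, Matrix.star_apply, Matrix.of_apply, Matrix.one_apply,
      eq_comm (a := i)]
    exact h
  · simp [hb x rfl]

/-- Subgaussian bound for the moment generating function of a Rademacher sum. -/
lemma sum_exp_sum_sign_mul_le {ι : Type*} [Fintype ι] [DecidableEq ι] (a : ι → ℝ) :
    ∑ e : ι → Bool, Real.exp (∑ i, (if e i then 1 else -1) * a i)
      ≤ 2 ^ Fintype.card ι * Real.exp ((∑ i, a i ^ 2) / 2) := by
  have h := (Finset.prod_univ_sum (fun _ : ι => (Finset.univ : Finset Bool))
    (fun i b => Real.exp ((if b then 1 else -1) * a i))).symm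
  rw [Fintype.piFinset_univ] at h
  simp_rw [Real.exp_sum]
  rw [h]
  calc ∏ i, ∑ b : Bool, Real.exp ((if b then 1 else -1) * a i)
      ≤ ∏ i, 2 * Real.exp (a i ^ 2 / 2) := by
        refine Finset.prod_le_prod (fun i _ => by positivity) fun i _ => ?_
        have := Real.cosh_le_exp_half_sq (a i)
        rw [Real.cosh_eq] at this
        simp only [Fintype.sum_bool, if_true, Bool.false_eq_true, if_false, one_mul, neg_mul]
        linarith
    _ = _ := by
        rw [Finset.prod_mul_distrib, ← Real.exp_sum, Finset.sum_div]
        simp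

lemma measurable_unitary_mul_left {ι : Type*} [Fintype ι] [DecidableEq ι]
    (W : ↥(Matrix.unitaryGroup ι ℂ)) : Measurable fun U => W * U := by
  refine Measurable.subtype_mk (measurable_pi_lambda _ fun i => measurable_pi_lambda _ fun j => ?_)
  have h : ∀ k, Measurable fun U : ↥(Matrix.unitaryGroup ι ℂ) => U.1 k j := fun k =>
    (measurable_pi_apply j).comp ((measurable_pi_apply k).comp measurable_subtype_coe)
  simp only [Matrix.mul_apply]
  exact Finset.measurable_sum _ fun k _ => (h k).const_mul _

lemma measurable_unitary_mul_right_apply {ι : Type*} [Fintype ι] [DecidableEq ι]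
    (V : ↥(Matrix.unitaryGroup ι ℂ)) (x y : ι) :
    Measurable fun U : ↥(Matrix.unitaryGroup ι ℂ) => (U * V).1 x y := by
  have h : ∀ k, Measurable fun U : ↥(Matrix.unitaryGroup ι ℂ) => U.1 x k := fun k =>
    (measurable_pi_apply k).comp ((measurable_pi_apply x).comp measurable_subtype_coe)
  change Measurable fun U : ↥(Matrix.unitaryGroup ι ℂ) => (U.1 * V.1) x y
  simp only [Matrix.mul_apply]
  exact Finset.measurable_sum _ fun k _ => (h k).mul_const _

lemma lintegral_unitary_mul_left {ι : Type*} [Fintype ι] [DecidableEq ι]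
    (μ : Measure ↥(Matrix.unitaryGroup ι ℂ)) [μ.IsMulLeftInvariant]
    (W : ↥(Matrix.unitaryGroup ι ℂ)) {f : ↥(Matrix.unitaryGroup ι ℂ) → ENNReal}
    (hf : Measurable f) : ∫⁻ U, f (W * U) ∂μ = ∫⁻ U, f U ∂μ := by
  conv_rhs => rw [← Measure.IsMulLeftInvariant.map_mul_left_eq_self (μ := μ) W]
  rw [lintegral_map hf (measurable_unitary_mul_left W)]

lemma sum_norm_sq_unitary_col {ι : Type*} [Fintype ι] [DecidableEq ι]
    (U : ↥(Matrix.unitaryGroup ι ℂ)) (y : ι) : ∑ i, ‖U.1 i y‖ ^ 2 = 1 := by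
  have h := congrFun (congrFun (Matrix.mem_unitaryGroup_iff'.1 U.2) y) y
  simp only [Matrix.mul_apply, Matrix.star_apply, Matrix.one_apply_eq] at h
  have h2 : ((∑ i, ‖U.1 i y‖ ^ 2 : ℝ) : ℂ) = 1 := by
    rw [← h]
    push_cast
    exact Finset.sum_congr rfl fun i _ => (Complex.conj_mul' _).symm
  exact_mod_cast h2

/-- The moment generating function of an entry of a left-invariant random unitary matrix
is subgaussian with variance proxy the reciprocal of the dimension. -/
lemma lintegral_exp_unitary_entry_le {ι : Type*} [Fintype ι] [DecidableEq ι]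
    (μ : Measure ↥(Matrix.unitaryGroup ι ℂ)) [μ.IsMulLeftInvariant] [IsProbabilityMeasure μ]
    (Y V : ↥(Matrix.unitaryGroup ι ℂ)) (x y : ι) (z : ℂ) (hz : ‖z‖ = 1) (l : ℝ) :
    ∫⁻ U, ENNReal.ofReal
        (Real.exp (l * Real.sqrt (Fintype.card ι) * (z * (Y * U * V).1 x y).re)) ∂μ
      ≤ ENNReal.ofReal (Real.exp (l ^ 2 / 2)) := by
  set r : ℝ := Real.sqrt (Fintype.card ι) with hr
  have hcard : (0 : ℝ) < Fintype.card ι := by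
    exact_mod_cast Fintype.card_pos_iff.2 ⟨x⟩
  have hr0 : 0 < r := Real.sqrt_pos.2 hcard
  have hr2 : r ^ 2 = Fintype.card ι := Real.sq_sqrt hcard.le
  let F : ↥(Matrix.unitaryGroup ι ℂ) → ENNReal := fun U =>
    ENNReal.ofReal (Real.exp (l * r * (z * (U * V).1 x y).re))
  have hF : Measurable F := by
    have := measurable_unitary_mul_right_apply V x y
    exact ENNReal.measurable_ofReal.comp (Real.measurable_exp.comp
      ((Complex.measurable_re.comp (this.const_mul z)).const_mul (l * r)))
  have hrow : ∀ e : ι → Bool, ∃ W : ↥(Matrix.unitaryGroup ι ℂ),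
      ∀ j, W.1 x j = (((if e j then 1 else -1) / r : ℝ) : ℂ) := by
    intro e
    refine exists_unitary_row_eq x
      (WithLp.toLp 2 fun j => (((if e j then 1 else -1) / r : ℝ) : ℂ)) ?_
    rw [EuclideanSpace.norm_eq, Real.sqrt_eq_one]
    have : ∀ j, ‖(((if e j then 1 else -1) / r : ℝ) : ℂ)‖ ^ 2 = 1 / r ^ 2 := by
      intro j
      rw [Complex.norm_real, Real.norm_eq_abs, sq_abs, div_pow]
      split_ifs <;> norm_num
    simp only [this, Finset.sum_const, Finset.card_univ, nsmul_eq_mul, hr2]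
    field_simp
  choose W hW using hrow
  have hFW : ∀ e U, F (W e * U) = ENNReal.ofReal
      (Real.exp (∑ i, (if e i then 1 else -1) * (l * (z * (U * V).1 i y).re))) := by
    intro e U
    simp only [F]
    congr 2
    have h1 : (W e * U * V).1 x y = ∑ i, (W e).1 x i * (U * V).1 i y := by
      rw [mul_assoc]; rfl
    rw [h1, Finset.mul_sum, Complex.re_sum, Finset.mul_sum]
    refine Finset.sum_congr rfl fun i _ => ?_
    rw [hW, mul_left_comm, Complex.re_ofReal_mul]
    field_simp
  have hsum : ∀ U, ∑ e : ι → Bool, F (W e * U)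
      ≤ 2 ^ Fintype.card ι * ENNReal.ofReal (Real.exp (l ^ 2 / 2)) := by
    intro U
    simp only [hFW]
    rw [← ENNReal.ofReal_sum_of_nonneg fun _ _ => (Real.exp_pos _).le]
    have h2 : (2 : ENNReal) ^ Fintype.card ι = ENNReal.ofReal (2 ^ Fintype.card ι) := by
      rw [ENNReal.ofReal_pow (by norm_num)]; norm_num
    rw [h2, ← ENNReal.ofReal_mul (by positivity)]
    refine ENNReal.ofReal_le_ofReal ((sum_exp_sum_sign_mul_le _).trans ?_)
    gcongr
    calc ∑ i, (l * (z * (U * V).1 i y).re) ^ 2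
        ≤ ∑ i, l ^ 2 * ‖(U * V).1 i y‖ ^ 2 := by
          refine Finset.sum_le_sum fun i _ => ?_
          rw [mul_pow]
          gcongr ?_ * ?_
          rw [← sq_abs]
          gcongr
          refine (Complex.abs_re_le_norm _).trans ?_
          rw [norm_mul, hz, one_mul]
      _ = l ^ 2 := by rw [← Finset.mul_sum, sum_norm_sq_unitary_col, mul_one]
  change ∫⁻ U, F (Y * U) ∂μ ≤ _
  rw [lintegral_unitary_mul_left μ Y hF]
  have hmul : (2 : ENNReal) ^ Fintype.card ι * ∫⁻ U, F U ∂μ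
      ≤ 2 ^ Fintype.card ι * ENNReal.ofReal (Real.exp (l ^ 2 / 2)) := by
    calc (2 : ENNReal) ^ Fintype.card ι * ∫⁻ U, F U ∂μ
        = ∑ e : ι → Bool, ∫⁻ U, F (W e * U) ∂μ := by
          simp [lintegral_unitary_mul_left μ _ hF]
      _ = ∫⁻ U, ∑ e : ι → Bool, F (W e * U) ∂μ :=
          (lintegral_finsetSum _ fun e _ => hF.comp (measurable_unitary_mul_left _)).symm
      _ ≤ ∫⁻ _, 2 ^ Fintype.card ι * ENNReal.ofReal (Real.exp (l ^ 2 / 2)) ∂μ :=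
          lintegral_mono hsum
      _ = _ := by simp
  exact (ENNReal.mul_le_mul_iff_right (by simp) (by simp)).1 hmul

lemma measure_unitary_entry_re_ge_le {ι : Type*} [Fintype ι] [DecidableEq ι]
    (μ : Measure ↥(Matrix.unitaryGroup ι ℂ)) [μ.IsMulLeftInvariant] [IsProbabilityMeasure μ]
    (Y V : ↥(Matrix.unitaryGroup ι ℂ)) (x y : ι) (z : ℂ) (hz : ‖z‖ = 1) {s : ℝ} (hs : 0 ≤ s) :
    μ {U | s ≤ (z * (Y * U * V).1 x y).re}
      ≤ ENNReal.ofReal (Real.exp (-(Fintype.card ι * s ^ 2 / 2))) := by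
  set r : ℝ := Real.sqrt (Fintype.card ι) with hr
  have hr2 : r ^ 2 = Fintype.card ι := Real.sq_sqrt (Nat.cast_nonneg _)
  have hr0 : 0 ≤ r := Real.sqrt_nonneg _
  have hmeas : Measurable fun U => ENNReal.ofReal
      (Real.exp (s * r * r * (z * (Y * U * V).1 x y).re)) := by
    have := (measurable_unitary_mul_right_apply V x y).comp (measurable_unitary_mul_left Y)
    exact ENNReal.measurable_ofReal.comp (Real.measurable_exp.comp
      ((Complex.measurable_re.comp (this.const_mul z)).const_mul (s * r * r)))
  have h := (mul_meas_ge_le_lintegral (μ := μ) hmeas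
    (ENNReal.ofReal (Real.exp (s * r * r * s)))).trans
    (lintegral_exp_unitary_entry_le μ Y V x y z hz (s * r))
  have hsub : μ {U | s ≤ (z * (Y * U * V).1 x y).re} ≤ μ {U | ENNReal.ofReal
      (Real.exp (s * r * r * s)) ≤ ENNReal.ofReal
      (Real.exp (s * r * r * (z * (Y * U * V).1 x y).re))} := by
    refine measure_mono fun U hU => ENNReal.ofReal_le_ofReal (Real.exp_le_exp.2 ?_)
    exact mul_le_mul_of_nonneg_left hU (by positivity)
  refine hsub.trans ?_
  have hpos : ENNReal.ofReal (Real.exp (s * r * r * s)) ≠ 0 := by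
    simp [Real.exp_pos]
  refine (ENNReal.mul_le_mul_iff_right hpos ENNReal.ofReal_ne_top).1 (h.trans (le_of_eq ?_))
  rw [← ENNReal.ofReal_mul (Real.exp_pos _).le, ← Real.exp_add, ← hr2]
  ring_nf

lemma measure_unitary_entry_norm_sq_ge_le {ι : Type*} [Fintype ι] [DecidableEq ι]
    (μ : Measure ↥(Matrix.unitaryGroup ι ℂ)) [μ.IsMulLeftInvariant] [IsProbabilityMeasure μ]
    (Y V : ↥(Matrix.unitaryGroup ι ℂ)) (x y : ι) {t : ℝ} (ht : 0 ≤ t) :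
    μ {U | t ≤ ‖(Y * U * V).1 x y‖ ^ 2}
      ≤ 4 * ENNReal.ofReal (Real.exp (-(Fintype.card ι * t / 4))) := by
  set s : ℝ := Real.sqrt (t / 2) with hs
  have hs2 : s ^ 2 = t / 2 := Real.sq_sqrt (by positivity)
  have hs0 : 0 ≤ s := Real.sqrt_nonneg _
  let A : ℂ → Set ↥(Matrix.unitaryGroup ι ℂ) := fun z => {U | s ≤ (z * (Y * U * V).1 x y).re}
  have hA : ∀ z, ‖z‖ = 1 →
      μ (A z) ≤ ENNReal.ofReal (Real.exp (-(Fintype.card ι * t / 4))) := by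
    intro z hz
    refine (measure_unitary_entry_re_ge_le μ Y V x y z hz hs0).trans (le_of_eq ?_)
    rw [hs2]
    ring_nf
  have hsub : {U | t ≤ ‖(Y * U * V).1 x y‖ ^ 2}
      ⊆ (A 1 ∪ A (-1)) ∪ (A (-Complex.I) ∪ A Complex.I) := by
    intro U hU
    simp only [Set.mem_ofPred_eq] at hU
    by_contra hc
    simp only [A, Set.mem_union, Set.mem_ofPred_eq, not_or, not_le, one_mul, neg_mul,
      Complex.neg_re, Complex.I_mul_re, neg_neg] at hc
    obtain ⟨⟨h1, h2⟩, h3, h4⟩ := hc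
    rw [Complex.sq_norm, Complex.normSq_apply] at hU
    nlinarith
  calc μ {U | t ≤ ‖(Y * U * V).1 x y‖ ^ 2}
      ≤ (μ (A 1) + μ (A (-1))) + (μ (A (-Complex.I)) + μ (A Complex.I)) :=
        (measure_mono hsub).trans ((measure_union_le _ _).trans
          (add_le_add (measure_union_le _ _) (measure_union_le _ _)))
    _ ≤ _ := by
        refine (add_le_add (add_le_add (hA 1 (by simp)) (hA (-1) (by simp)))
          (add_le_add (hA (-Complex.I) (by simp)) (hA Complex.I (by simp)))).trans (le_of_eq ?_)
        ring

/-- There are universal constants `c, C > 0` such that for every `D ≥ 2`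
and all unitaries `Y, V`, the Haar probability that some coordinate satisfies
`|(Y U V)_{x,0}|² ≥ D^{−1/4}` is at most `C · D · exp(−c·√D)`. -/
theorem large_coordinate_probability_bound :
    ∃ c C : ℝ, 0 < c ∧ 0 < C ∧
      ∀ (D : ℕ) (hD : 2 ≤ D),
      ∀ (Y V : ↥(Matrix.unitaryGroup (Fin D) ℂ))
        (μ : Measure ↥(Matrix.unitaryGroup (Fin D) ℂ)),
        μ.IsHaarMeasure → IsProbabilityMeasure μ →
        μ {U | ∃ x : Fin D, (D : ℝ) ^ (-(1 : ℝ) / 4) ≤ ‖(Y * U * V).1 x ⟨0, by omega⟩‖ ^ 2}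
          ≤ ENNReal.ofReal (C * D * Real.exp (-c * Real.sqrt D)) := by
  refine ⟨1 / 4, 4, by norm_num, by norm_num, fun D hD Y V μ hμ hμ1 => ?_⟩
  set t : ℝ := (D : ℝ) ^ (-(1 : ℝ) / 4) with ht
  have hD1 : (1 : ℝ) ≤ D := by exact_mod_cast (by omega : 1 ≤ D)
  have hDt : Real.sqrt D ≤ D * t := by
    have h : (D : ℝ) * t = (D : ℝ) ^ ((3 : ℝ) / 4) := by
      rw [ht, ← Real.rpow_one_add' (by positivity) (by norm_num)]
      norm_num
    rw [h, Real.sqrt_eq_rpow]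
    exact Real.rpow_le_rpow_of_exponent_le hD1 (by norm_num)
  have hexp : Real.exp (-(D * t / 4)) ≤ Real.exp (-(1 / 4) * Real.sqrt D) :=
    Real.exp_le_exp.2 (by linarith)
  rw [Set.ofPred_exists]
  calc μ (⋃ x : Fin D, {U | t ≤ ‖(Y * U * V).1 x ⟨0, by omega⟩‖ ^ 2})
      ≤ ∑ x : Fin D, μ {U | t ≤ ‖(Y * U * V).1 x ⟨0, by omega⟩‖ ^ 2} :=
        measure_iUnion_fintype_le _ _
    _ ≤ ∑ _x : Fin D, 4 * ENNReal.ofReal (Real.exp (-(1 / 4) * Real.sqrt D)) := by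
        refine Finset.sum_le_sum fun x _ =>
          (measure_unitary_entry_norm_sq_ge_le μ Y V x _ (by positivity)).trans ?_
        rw [Fintype.card_fin]
        gcongr
    _ = ENNReal.ofReal (4 * D * Real.exp (-(1 / 4) * Real.sqrt D)) := by
        rw [ENNReal.ofReal_mul (by positivity), ENNReal.ofReal_mul (by norm_num),
          ENNReal.ofReal_natCast, Finset.sum_const, Finset.card_univ, Fintype.card_fin,
          nsmul_eq_mul]
        norm_num
        ring
end

section
/- There exists a universal constant C > 0 such that whenever k < (2^ℓ/√6)^{4/7}, the distribution Q_k(s_0,...,s_k) = Pr(s_0) · ∫_{U(D)} ∏_{i=1}^k ⟨y^i_{s_0...s_i}| U σ^{i−1}_{s_0...s_{i−1}} U† |y^i_{s_0...s_i}⟩ λ^i_{s_0...s_i} dU (with dU the Haar probability measure on the group U(D) of D×D complex unitary matrices) satisfies ∑_{(s_0,...,s_k) ∈ {1,...,D_m}^{k+1}} |P_k(s_0,...,s_k) − Q_k(s_0,...,s_k)| ≤ C · k³ / 2^ℓ. -/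
open MeasureTheory Matrix
open scoped ComplexOrder

instance {m n : Type*} [Countable m] [Countable n] : BorelSpace (Matrix m n ℂ) :=
  inferInstanceAs (BorelSpace (m → n → ℂ))

instance {d : Type*} [Fintype d] [DecidableEq d] : CompactSpace (unitaryGroup d ℂ) := by
  have hc : IsCompact (Set.pi Set.univ fun _ : d => Set.pi Set.univ fun _ : d =>
      Metric.closedBall (0 : ℂ) 1) :=
    isCompact_univ_pi fun _ => isCompact_univ_pi fun _ => isCompact_closedBall _ _
  have hcl : IsClosed {U : Matrix d d ℂ | U ∈ unitaryGroup d ℂ} := by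
    have : {U : Matrix d d ℂ | U ∈ unitaryGroup d ℂ} = {U | U * star U = 1} := by
      ext U; exact mem_unitaryGroup_iff
    rw [this]
    exact isClosed_eq (by fun_prop) continuous_const
  refine isCompact_iff_compactSpace.mp (hc.of_isClosed_subset hcl ?_)
  intro U hU i _ j _
  simpa using entry_norm_bound_of_unitary hU i j

section ParametricIntegral

variable {G : Type*} [TopologicalSpace G] [CompactSpace G] [MeasurableSpace G]
  [OpensMeasurableSpace G] {μ : Measure G} [IsFiniteMeasure μ]

lemma Continuous.integrable_of_compactSpace {E : Type*} [NormedAddCommGroup E]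
    [SecondCountableTopology E] {f : G → E} (hf : Continuous f) : Integrable f μ := by
  obtain ⟨C, hC⟩ := isCompact_univ.exists_bound_of_continuousOn hf.continuousOn
  exact Integrable.of_bound hf.aestronglyMeasurable C
    (Filter.Eventually.of_forall fun x => hC x (Set.mem_univ x))

lemma hasDerivAt_integral_of_continuous {F F' : ℝ → G → ℂ}
    (hF : ∀ t, Continuous (F t)) (hF' : Continuous fun p : ℝ × G => F' p.1 p.2)
    (h : ∀ t g, HasDerivAt (fun t => F t g) (F' t g) t) (t₀ : ℝ) :
    HasDerivAt (fun t => ∫ g, F t g ∂μ) (∫ g, F' t₀ g ∂μ) t₀ := by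
  obtain ⟨C, hC⟩ := ((isCompact_Icc (a := t₀ - 1) (b := t₀ + 1)).prod
    (isCompact_univ (X := G))).exists_bound_of_continuousOn hF'.continuousOn
  have hF'' : Continuous (F' t₀) := hF'.comp (Continuous.prodMk_right t₀)
  refine (hasDerivAt_integral_of_dominated_loc_of_deriv_le (bound := fun _ => C)
    (Icc_mem_nhds (by linarith : t₀ - 1 < t₀) (by linarith : t₀ < t₀ + 1))
    (Filter.Eventually.of_forall fun t => (hF t).aestronglyMeasurable)
    (hF t₀).integrable_of_compactSpace hF''.aestronglyMeasurable
    (Filter.Eventually.of_forall fun g t ht => hC (t, g) ⟨ht, Set.mem_univ g⟩)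
    (integrable_const C) (Filter.Eventually.of_forall fun g t _ => h t g)).2

end ParametricIntegral

lemma permanent_succ {R : Type*} [CommSemiring R] {n : ℕ} (M : Matrix (Fin (n + 1)) (Fin (n + 1)) R) :
    M.permanent = ∑ p, M p 0 * (M.submatrix (Equiv.swap 0 p ∘ Fin.succ) Fin.succ).permanent := by
  unfold permanent
  rw [← Equiv.Perm.decomposeFin.symm.sum_comp, Fintype.sum_prod_type]
  refine Finset.sum_congr rfl fun p _ => ?_
  rw [Finset.mul_sum]
  refine Finset.sum_congr rfl fun τ _ => ?_
  rw [Fin.prod_univ_succ]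
  simp [Equiv.Perm.decomposeFin_symm_apply_zero, Equiv.Perm.decomposeFin_symm_apply_succ]

section Haar

variable {d : Type*} [Fintype d]

/-- The pointwise first-order variation of the integrand of `unitaryMoment` when `U` is
perturbed to `(1 + A) U`, with `A` anti-Hermitian. -/
noncomputable def momentVariation {n : ℕ} (a b x z : Fin n → d → ℂ) (A U : Matrix d d ℂ) : ℂ :=
  (∑ i, (∏ j ∈ Finset.univ.erase i, a j ⬝ᵥ (U *ᵥ x j)) * (a i ⬝ᵥ (A *ᵥ (U *ᵥ x i)))) *
      ∏ i, z i ⬝ᵥ (Uᴴ *ᵥ b i) -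
    (∏ i, a i ⬝ᵥ (U *ᵥ x i)) *
      ∑ i, (∏ j ∈ Finset.univ.erase i, z j ⬝ᵥ (Uᴴ *ᵥ b j)) * (z i ⬝ᵥ (Uᴴ *ᵥ (A *ᵥ b i)))

lemma momentVariation_add {n : ℕ} (a b x z : Fin n → d → ℂ) (A B U : Matrix d d ℂ) :
    momentVariation a b x z (A + B) U =
      momentVariation a b x z A U + momentVariation a b x z B U := by
  simp only [momentVariation, add_mulVec, mulVec_add, dotProduct_add, mul_add,
    Finset.sum_add_distrib]
  ring

lemma momentVariation_smul {n : ℕ} (a b x z : Fin n → d → ℂ) (c : ℂ) (A U : Matrix d d ℂ) :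
    momentVariation a b x z (c • A) U = c * momentVariation a b x z A U := by
  simp only [momentVariation, smul_mulVec, mulVec_smul, dotProduct_smul, smul_eq_mul,
    mul_left_comm _ c, ← Finset.mul_sum]
  ring

lemma star_dotProduct_self_eq_ofReal (v : d → ℂ) : star v ⬝ᵥ v = ((∑ i, ‖v i‖ ^ 2 : ℝ) : ℂ) := by
  simp [dotProduct, Complex.conj_mul']

variable [DecidableEq d]

/-- The unitary obtained by multiplying the phase `exp (i t)` onto the line spanned by `v`. -/
noncomputable def phaseMatrix (v : d → ℂ) (t : ℝ) : Matrix d d ℂ :=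
  1 + (Complex.exp (t * Complex.I) - 1) • vecMulVec v (star v)

omit [Fintype d] in
lemma phaseMatrix_conjTranspose (v : d → ℂ) (t : ℝ) :
    (phaseMatrix v t)ᴴ = 1 + (Complex.exp (-(t * Complex.I)) - 1) • vecMulVec v (star v) := by
  simp [phaseMatrix, conjTranspose_add, conjTranspose_smul, conjTranspose_vecMulVec,
    ← Complex.exp_conj]

lemma phaseMatrix_mem {v : d → ℂ} (hv : star v ⬝ᵥ v = 1) (t : ℝ) :
    phaseMatrix v t ∈ unitaryGroup d ℂ := by
  rw [mem_unitaryGroup_iff, star_eq_conjTranspose, phaseMatrix_conjTranspose, phaseMatrix]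
  have h1 : Complex.exp (t * Complex.I) * Complex.exp (-(t * Complex.I)) = 1 := by
    rw [← Complex.exp_add]; simp
  have h2 : vecMulVec v (star v) * vecMulVec v (star v) = vecMulVec v (star v) := by
    rw [vecMulVec_mul_vecMulVec, hv]; simp
  generalize Complex.exp (t * Complex.I) = c at *
  generalize Complex.exp (-(t * Complex.I)) = c' at *
  rw [add_mul, mul_add, mul_add, one_mul, one_mul, smul_mul_smul_comm, h2, mul_one, add_assoc,
    ← add_smul, ← add_smul]
  have : (c' - 1 + ((c - 1) + (c - 1) * (c' - 1))) = 0 := by linear_combination h1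
  rw [this]; simp

/-- Mixed moment `∫ ∏ᵢ (aᵢ U xᵢ) (zᵢ U† bᵢ) dU`. -/
noncomputable def unitaryMoment (μ : Measure (unitaryGroup d ℂ)) {n : ℕ} (a b x z : Fin n → d → ℂ) :
    ℂ :=
  ∫ U : unitaryGroup d ℂ, (∏ i, a i ⬝ᵥ (U.1 *ᵥ x i)) * ∏ i, z i ⬝ᵥ (U.1ᴴ *ᵥ b i) ∂μ

lemma continuous_momentVariation {n : ℕ} (a b x z : Fin n → d → ℂ) (A : Matrix d d ℂ) :
    Continuous fun U : unitaryGroup d ℂ => momentVariation a b x z A U.1 := by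
  unfold momentVariation
  fun_prop

variable {μ : Measure (unitaryGroup d ℂ)} [IsProbabilityMeasure μ] [μ.IsMulLeftInvariant]

lemma integral_momentVariation_unit {n : ℕ} (a b x z : Fin n → d → ℂ) {v : d → ℂ}
    (hv : star v ⬝ᵥ v = 1) :
    ∫ U : unitaryGroup d ℂ, momentVariation a b x z (vecMulVec v (star v)) U.1 ∂μ = 0 := by
  set P := vecMulVec v (star v) with hP
  let c : ℝ → ℂ := fun t => Complex.exp (t * Complex.I)
  let c' : ℝ → ℂ := fun t => Complex.exp (-(t * Complex.I))
  let α : Fin n → ℝ → unitaryGroup d ℂ → ℂ := fun i t U =>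
    a i ⬝ᵥ (U.1 *ᵥ x i) + (c t - 1) * (a i ⬝ᵥ (P *ᵥ (U.1 *ᵥ x i)))
  let β : Fin n → ℝ → unitaryGroup d ℂ → ℂ := fun i t U =>
    z i ⬝ᵥ (U.1ᴴ *ᵥ b i) + (c' t - 1) * (z i ⬝ᵥ (U.1ᴴ *ᵥ (P *ᵥ b i)))
  let α' : Fin n → ℝ → unitaryGroup d ℂ → ℂ := fun i t U =>
    (c t * Complex.I) * (a i ⬝ᵥ (P *ᵥ (U.1 *ᵥ x i)))
  let β' : Fin n → ℝ → unitaryGroup d ℂ → ℂ := fun i t U =>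
    (-(c' t * Complex.I)) * (z i ⬝ᵥ (U.1ᴴ *ᵥ (P *ᵥ b i)))
  have hc : ∀ t, HasDerivAt c (c t * Complex.I) t := fun t => by
    have := ((Complex.ofRealCLM.hasDerivAt (x := t)).mul_const Complex.I).cexp
    simpa [c] using this
  have hc' : ∀ t, HasDerivAt c' (-(c' t * Complex.I)) t := fun t => by
    have := ((Complex.ofRealCLM.hasDerivAt (x := t)).mul_const Complex.I).neg.cexp
    simpa [c'] using this
  have hα : ∀ i t U, HasDerivAt (fun t => α i t U) (α' i t U) t := fun i t U =>
    (((hc t).sub_const 1).mul_const _).const_add _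
  have hβ : ∀ i t U, HasDerivAt (fun t => β i t U) (β' i t U) t := fun i t U =>
    (((hc' t).sub_const 1).mul_const _).const_add _
  have hconst : ∀ t, ∫ U, (∏ i, α i t U) * ∏ i, β i t U ∂μ = unitaryMoment μ a b x z := by
    intro t
    refine Eq.trans ?_ (integral_mul_left_eq_self (μ := μ) (fun U : unitaryGroup d ℂ =>
      (∏ i, a i ⬝ᵥ (U.1 *ᵥ x i)) * ∏ i, z i ⬝ᵥ (U.1ᴴ *ᵥ b i))
      ⟨phaseMatrix v t, phaseMatrix_mem hv t⟩)
    refine integral_congr_ae (Filter.Eventually.of_forall fun U => ?_)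
    simp only [α, β, c, c', Submonoid.coe_mul, conjTranspose_mul, phaseMatrix_conjTranspose,
      ← mulVec_mulVec]
    simp only [phaseMatrix, add_mulVec, one_mulVec, smul_mulVec, mulVec_add, mulVec_smul,
      dotProduct_add, dotProduct_smul, smul_eq_mul, hP]
  have hcc : Continuous c := by fun_prop
  have hcc' : Continuous c' := by fun_prop
  have key := hasDerivAt_integral_of_continuous (μ := μ)
    (F := fun t U => (∏ i, α i t U) * ∏ i, β i t U)
    (F' := fun t U => (∑ i, (∏ j ∈ Finset.univ.erase i, α j t U) • α' i t U) * ∏ i, β i t U +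
      (∏ i, α i t U) * ∑ i, (∏ j ∈ Finset.univ.erase i, β j t U) • β' i t U)
    (fun t => by simp only [α, β]; fun_prop)
    (by simp only [α, β, α', β']; fun_prop)
    (fun t U => (HasDerivAt.fun_finsetProd fun i _ => hα i t U).mul
      (HasDerivAt.fun_finsetProd fun i _ => hβ i t U)) 0
  simp only [hconst] at key
  have h0 := key.unique (hasDerivAt_const (0 : ℝ) (unitaryMoment μ a b x z))
  have h1 : ∀ U : unitaryGroup d ℂ, (∑ i, (∏ j ∈ Finset.univ.erase i, α j 0 U) • α' i 0 U) *
      ∏ i, β i 0 U + (∏ i, α i 0 U) * ∑ i, (∏ j ∈ Finset.univ.erase i, β j 0 U) • β' i 0 U =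
      Complex.I * momentVariation a b x z P U.1 := by
    intro U
    simp only [α, β, α', β', c, c', momentVariation, Complex.ofReal_zero, zero_mul, neg_zero,
      Complex.exp_zero, sub_self, add_zero, one_mul, smul_eq_mul, neg_mul, mul_neg,
      Finset.sum_neg_distrib, mul_left_comm _ Complex.I, ← Finset.mul_sum]
    ring
  simp only [h1, integral_const_mul] at h0
  simpa using h0

lemma integral_momentVariation_self {n : ℕ} (a b x z : Fin n → d → ℂ) (v : d → ℂ) :
    ∫ U : unitaryGroup d ℂ, momentVariation a b x z (vecMulVec v (star v)) U.1 ∂μ = 0 := by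
  have hr := star_dotProduct_self_eq_ofReal v
  by_cases hv : v = 0
  · simp [hv, momentVariation]
  have hpos : 0 < ∑ i, ‖v i‖ ^ 2 := by
    obtain ⟨i, hi⟩ := Function.ne_iff.mp hv
    refine Finset.sum_pos' (fun _ _ => by positivity) ⟨i, Finset.mem_univ i, ?_⟩
    have : 0 < ‖v i‖ := norm_pos_iff.mpr hi
    positivity
  set r := ∑ i, ‖v i‖ ^ 2
  have hs : ((√r : ℝ) : ℂ) ≠ 0 := by
    exact_mod_cast (Real.sqrt_pos.mpr hpos).ne'
  have hss : ((√r : ℝ) : ℂ) * ((√r : ℝ) : ℂ) = (r : ℂ) := by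
    exact_mod_cast Real.mul_self_sqrt hpos.le
  have h := integral_momentVariation_unit (μ := μ) a b x z (v := ((√r : ℝ) : ℂ)⁻¹ • v) (by
    rw [star_smul, smul_dotProduct, dotProduct_smul, hr, ← hss]
    simp only [star_inv₀, RCLike.star_def, Complex.conj_ofReal, smul_eq_mul]
    field_simp)
  have h2 : vecMulVec v (star v) = (r : ℂ) •
      vecMulVec (((√r : ℝ) : ℂ)⁻¹ • v) (star (((√r : ℝ) : ℂ)⁻¹ • v)) := by
    rw [← hss]
    ext i j
    simp [vecMulVec_apply]
    field_simp
  rw [h2]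
  simp only [momentVariation_smul, integral_const_mul, h, mul_zero]

lemma integral_momentVariation_vecMulVec {n : ℕ} (a b x z : Fin n → d → ℂ) (p q : d → ℂ) :
    ∫ U : unitaryGroup d ℂ, momentVariation a b x z (vecMulVec p q) U.1 ∂μ = 0 := by
  have h : vecMulVec p q = (1 / 4 : ℂ) • (vecMulVec (p + star q) (star (p + star q)) +
      (-1 : ℂ) • vecMulVec (p + (-1 : ℂ) • star q) (star (p + (-1 : ℂ) • star q)) +
      Complex.I • vecMulVec (p + Complex.I • star q) (star (p + Complex.I • star q)) +
      (-Complex.I) • vecMulVec (p + (-Complex.I) • star q) (star (p + (-Complex.I) • star q))) := by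
    ext i j
    simp [vecMulVec_apply]
    ring_nf
    simp [Complex.I_sq]
    ring
  have hi := fun A => (continuous_momentVariation a b x z A).integrable_of_compactSpace (μ := μ)
  rw [h]
  simp only [momentVariation_smul, momentVariation_add, integral_const_mul]
  rw [integral_add, integral_add, integral_add]
  · simp only [integral_const_mul, integral_momentVariation_self]
    simp
  all_goals
    repeat' first
      | exact hi _
      | refine Integrable.const_mul ?_ _
      | refine Integrable.add ?_ ?_

lemma sum_dotProduct_single_mul (p q : d → ℂ) :
    ∑ e, (p ⬝ᵥ Pi.single e 1) * (Pi.single e 1 ⬝ᵥ q) = p ⬝ᵥ q := by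
  simp only [dotProduct_single_one, single_one_dotProduct]
  rfl

omit [DecidableEq d] in
lemma dotProduct_vecMulVec_mulVec (r p q w : d → ℂ) :
    r ⬝ᵥ (vecMulVec p q *ᵥ w) = (r ⬝ᵥ p) * (q ⬝ᵥ w) := by
  rw [dotProduct_mulVec, vecMul_vecMulVec, smul_dotProduct, smul_eq_mul]

omit [DecidableEq d] in
lemma dotProduct_mulVec_vecMulVec_mulVec (r p q w : d → ℂ) (M : Matrix d d ℂ) :
    r ⬝ᵥ (M *ᵥ (vecMulVec p q *ᵥ w)) = (r ⬝ᵥ (M *ᵥ p)) * (q ⬝ᵥ w) := by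
  rw [mulVec_mulVec, mul_vecMulVec, dotProduct_vecMulVec_mulVec]

lemma Fin.prod_erase_zero {n : ℕ} (f : Fin (n + 1) → ℂ) :
    ∏ j ∈ Finset.univ.erase 0, f j = ∏ j : Fin n, f j.succ := by
  rw [Fin.univ_succ, Finset.erase_cons, Finset.prod_map]
  rfl

lemma Fin.prod_erase_succ {n : ℕ} (f : Fin (n + 1) → ℂ) (i : Fin n) :
    ∏ j ∈ Finset.univ.erase i.succ, f j = f 0 * ∏ j ∈ Finset.univ.erase i, f j.succ := by
  rw [← Finset.mul_prod_erase (Finset.univ.erase i.succ) f (a := 0)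
    (by simp [Fin.succ_ne_zero, Ne.symm]), Finset.erase_right_comm]
  congr 1
  have : (Finset.univ.erase (0 : Fin (n + 1))).erase i.succ =
      (Finset.univ.erase i).map (Fin.succEmb n) := by
    ext j
    refine Fin.cases ?_ (fun j => ?_) j <;> simp [Fin.succ_ne_zero]
  rw [this, Finset.prod_map]
  rfl

lemma Fin.prod_erase_eq_prod_swap {n : ℕ} (f : Fin (n + 1) → ℂ) (i : Fin (n + 1)) :
    ∏ j ∈ Finset.univ.erase i, f j = ∏ j : Fin n, f (Equiv.swap 0 i j.succ) := by
  rw [← Fin.prod_erase_zero fun j => f (Equiv.swap 0 i j)]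
  refine Finset.prod_equiv (Equiv.swap 0 i) (fun j => ?_) fun j _ => by simp
  simp [Equiv.swap_apply_eq_iff]

/-- Pointwise form of the recursion `unitaryMoment_succ`. -/
lemma sum_momentVariation_single {n : ℕ} (a b x z : Fin (n + 1) → d → ℂ)
    (U : unitaryGroup d ℂ) :
    ∑ e, momentVariation (Function.update a 0 (Pi.single e 1)) b x z
        (vecMulVec (Pi.single e 1) (a 0)) U.1 =
      Fintype.card d * ((∏ i, a i ⬝ᵥ (U.1 *ᵥ x i)) * ∏ i, z i ⬝ᵥ (U.1ᴴ *ᵥ b i)) +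
      ∑ i : Fin n, (∏ j, a (Equiv.swap 0 i.succ j) ⬝ᵥ (U.1 *ᵥ x j)) *
        ∏ j, z j ⬝ᵥ (U.1ᴴ *ᵥ b j) -
      ∑ i : Fin (n + 1), ((a 0 ⬝ᵥ b i) * (z i ⬝ᵥ x 0)) *
        ((∏ j : Fin n, a j.succ ⬝ᵥ (U.1 *ᵥ x j.succ)) *
          ∏ j : Fin n, z (Equiv.swap 0 i j.succ) ⬝ᵥ (U.1ᴴ *ᵥ b (Equiv.swap 0 i j.succ))) := by
  have hU : (U.1)ᴴ * U.1 = 1 := by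
    rw [← star_eq_conjTranspose]; exact mem_unitaryGroup_iff'.mp U.2
  have hΦ : ∀ i : Fin n, ∏ j, a (Equiv.swap 0 i.succ j) ⬝ᵥ (U.1 *ᵥ x j) =
      ((a i.succ ⬝ᵥ (U.1 *ᵥ x 0)) * (a 0 ⬝ᵥ (U.1 *ᵥ x i.succ))) *
        ∏ j ∈ Finset.univ.erase i, a j.succ ⬝ᵥ (U.1 *ᵥ x j.succ) := by
    intro i
    rw [Fin.prod_univ_succ, ← Finset.mul_prod_erase Finset.univ _ (Finset.mem_univ i)]
    simp only [Equiv.swap_apply_left, Equiv.swap_apply_right, mul_assoc]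
    congr 2
    refine Finset.prod_congr rfl fun j hj => ?_
    rw [Equiv.swap_apply_of_ne_of_ne (Fin.succ_ne_zero j)
      (fun h => (Finset.ne_of_mem_erase hj) (Fin.succ_injective n h))]
  have h1 : ∀ e, momentVariation (Function.update a 0 (Pi.single e 1)) b x z
        (vecMulVec (Pi.single e 1) (a 0)) U.1 =
      (∏ i, a i ⬝ᵥ (U.1 *ᵥ x i)) * ∏ i, z i ⬝ᵥ (U.1ᴴ *ᵥ b i) +
      (∑ i : Fin n, ((a i.succ ⬝ᵥ Pi.single e 1) * (Pi.single e 1 ⬝ᵥ (U.1 *ᵥ x 0))) *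
        ((a 0 ⬝ᵥ (U.1 *ᵥ x i.succ)) *
        ∏ j ∈ Finset.univ.erase i, a j.succ ⬝ᵥ (U.1 *ᵥ x j.succ))) *
          ∏ i, z i ⬝ᵥ (U.1ᴴ *ᵥ b i) -
      ∑ i : Fin (n + 1), (((z i ᵥ* U.1ᴴ) ⬝ᵥ Pi.single e 1) * (Pi.single e 1 ⬝ᵥ (U.1 *ᵥ x 0))) *
        ((a 0 ⬝ᵥ b i) * ((∏ j : Fin n, a j.succ ⬝ᵥ (U.1 *ᵥ x j.succ)) *
          ∏ j : Fin n, z (Equiv.swap 0 i j.succ) ⬝ᵥ (U.1ᴴ *ᵥ b (Equiv.swap 0 i j.succ)))) := by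
    intro e
    simp only [momentVariation, dotProduct_vecMulVec_mulVec, dotProduct_mulVec_vecMulVec_mulVec,
      Fin.prod_erase_eq_prod_swap (fun j => z j ⬝ᵥ (U.1ᴴ *ᵥ b j))]
    rw [Fin.sum_univ_succ, Fin.prod_erase_zero,
      Fin.prod_univ_succ (fun i => Function.update a 0 (Pi.single e 1) i ⬝ᵥ (U.1 *ᵥ x i)),
      Fin.prod_univ_succ (fun i => a i ⬝ᵥ (U.1 *ᵥ x i))]
    simp only [Fin.prod_erase_succ, Function.update_self, ne_eq, Fin.succ_ne_zero,
      not_false_eq_true, Function.update_of_ne]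
    rw [add_mul, Finset.mul_sum]
    congr 1
    · congr 1
      · simp only [dotProduct_single_one, Pi.single_eq_same]
        ring
      · congr 1
        exact Finset.sum_congr rfl fun i _ => by ring
    · exact Finset.sum_congr rfl fun i _ => by
        rw [dotProduct_mulVec (z i)]; ring
  simp only [h1, Finset.sum_sub_distrib, Finset.sum_add_distrib, ← Finset.sum_mul]
  rw [Finset.sum_comm, Finset.sum_comm (s := Finset.univ (α := d))]
  simp only [← Finset.sum_mul, sum_dotProduct_single_mul, hΦ]
  congr 1
  · simp [mul_assoc]
  · refine Finset.sum_congr rfl fun i _ => ?_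
    rw [← dotProduct_mulVec, mulVec_mulVec, hU, one_mulVec]
    ring

lemma unitaryMoment_succ {n : ℕ} (a b x z : Fin (n + 1) → d → ℂ) :
    Fintype.card d * unitaryMoment μ a b x z +
        ∑ i : Fin n, unitaryMoment μ (a ∘ Equiv.swap 0 i.succ) b x z =
      ∑ i : Fin (n + 1), ((a 0 ⬝ᵥ b i) * (z i ⬝ᵥ x 0)) *
        unitaryMoment μ (a ∘ Fin.succ) (b ∘ Equiv.swap 0 i ∘ Fin.succ) (x ∘ Fin.succ)
          (z ∘ Equiv.swap 0 i ∘ Fin.succ) := by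
  have h : ∑ e : d, ∫ U : unitaryGroup d ℂ, momentVariation (Function.update a 0 (Pi.single e 1))
      b x z (vecMulVec (Pi.single e 1) (a 0)) U.1 ∂μ = 0 :=
    Finset.sum_eq_zero fun e _ => integral_momentVariation_vecMulVec _ _ _ _ _ _
  rw [← integral_finsetSum _ fun e _ =>
    (continuous_momentVariation _ _ _ _ _).integrable_of_compactSpace] at h
  simp only [sum_momentVariation_single] at h
  rw [integral_sub, integral_add, integral_finsetSum, integral_finsetSum] at h
  · simp only [integral_const_mul] at h
    exact sub_eq_zero.mp h
  all_goals
    intros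
    refine Continuous.integrable_of_compactSpace ?_
    fun_prop

/-- Permanental approximation of the mixed moments of the Haar unitary: to leading order they
are the moments of a complex Gaussian matrix. -/
lemma norm_unitaryMoment_sub_permanent_le (n : ℕ) (hn : 4 * (n : ℝ) ^ 2 ≤ Fintype.card d)
    (hd : 0 < Fintype.card d)
    (a b x z : Fin n → d → ℂ) (hxz : ∀ i j, ‖z i ⬝ᵥ x j‖ ≤ 1) :
    ‖(Fintype.card d : ℂ) ^ n * unitaryMoment μ a b x z -
        (of fun i j => (a j ⬝ᵥ b i) * (z i ⬝ᵥ x j)).permanent‖ ≤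
      4 * (n : ℝ) ^ 2 / Fintype.card d * (of fun i j => ‖a j ⬝ᵥ b i‖).permanent := by
  induction n with
  | zero => simp [unitaryMoment, permanent]
  | succ n ih =>
    set D : ℝ := (Fintype.card d : ℝ) with hD
    have hD0 : 0 < D := by rw [hD]; exact_mod_cast hd
    push_cast at hn
    have hn' : 4 * (n : ℝ) ^ 2 ≤ D := by nlinarith [(Nat.cast_nonneg n : (0 : ℝ) ≤ n)]
    set S : ℝ := (of fun i j => ‖a j ⬝ᵥ b i‖).permanent with hS
    have hS0 : 0 ≤ S := Finset.sum_nonneg fun _ _ => Finset.prod_nonneg fun _ _ => by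
      rw [of_apply]; exact norm_nonneg _
    have hSperm : ∀ π : Equiv.Perm (Fin (n + 1)),
        (of fun i j => ‖(a ∘ π) j ⬝ᵥ b i‖).permanent = S := fun π =>
      permanent_permute_rows π (of fun i j => ‖a j ⬝ᵥ b i‖)
    let H : (Fin (n + 1) → d → ℂ) → ℂ := fun a =>
      (of fun i j => (a j ⬝ᵥ b i) * (z i ⬝ᵥ x j)).permanent
    let T : (Fin (n + 1) → d → ℂ) → ℂ := fun a =>
      (Fintype.card d : ℂ) ^ (n + 1) * unitaryMoment μ a b x z
    have hH : ∀ π : Equiv.Perm (Fin (n + 1)), ‖H (a ∘ π)‖ ≤ S := by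
      intro π
      rw [← hSperm π]
      refine (norm_sum_le _ _).trans (Finset.sum_le_sum fun σ _ => ?_)
      rw [norm_prod]
      refine Finset.prod_le_prod (fun _ _ => norm_nonneg _) fun i _ => ?_
      simp only [of_apply, norm_mul]
      exact mul_le_of_le_one_right (norm_nonneg _) (hxz _ _)
    obtain ⟨π, hπ⟩ := Finite.exists_max fun π : Equiv.Perm (Fin (n + 1)) =>
      ‖T (a ∘ π) - H (a ∘ π)‖
    set m := ‖T (a ∘ π) - H (a ∘ π)‖ with hm
    have hrec : T (a ∘ π) - H (a ∘ π) =
        ∑ i : Fin (n + 1), (((a ∘ π) 0 ⬝ᵥ b i) * (z i ⬝ᵥ x 0)) *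
          ((Fintype.card d : ℂ) ^ n * unitaryMoment μ ((a ∘ π) ∘ Fin.succ)
            (b ∘ Equiv.swap 0 i ∘ Fin.succ) (x ∘ Fin.succ) (z ∘ Equiv.swap 0 i ∘ Fin.succ) -
            (of fun i' j => (((a ∘ π) ∘ Fin.succ) j ⬝ᵥ (b ∘ Equiv.swap 0 i ∘ Fin.succ) i') *
              ((z ∘ Equiv.swap 0 i ∘ Fin.succ) i' ⬝ᵥ (x ∘ Fin.succ) j)).permanent) -
        (Fintype.card d : ℂ)⁻¹ * ∑ i : Fin n, T (a ∘ (π * Equiv.swap 0 i.succ : Equiv.Perm _)) := by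
      have h1 := unitaryMoment_succ (μ := μ) (a ∘ π) b x z
      have h2 : H (a ∘ π) = _ := permanent_succ _
      have hne : (Fintype.card d : ℂ) ≠ 0 := by exact_mod_cast hd.ne'
      rw [h2]
      simp only [mul_sub, Finset.sum_sub_distrib]
      have h3 : ∑ i : Fin (n + 1), (((a ∘ π) 0 ⬝ᵥ b i) * (z i ⬝ᵥ x 0)) *
          ((Fintype.card d : ℂ) ^ n * unitaryMoment μ ((a ∘ π) ∘ Fin.succ)
            (b ∘ Equiv.swap 0 i ∘ Fin.succ) (x ∘ Fin.succ) (z ∘ Equiv.swap 0 i ∘ Fin.succ)) =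
          (Fintype.card d : ℂ) ^ n * (Fintype.card d * unitaryMoment μ (a ∘ π) b x z +
            ∑ i : Fin n, unitaryMoment μ ((a ∘ π) ∘ Equiv.swap 0 i.succ) b x z) := by
        rw [h1, Finset.mul_sum]
        exact Finset.sum_congr rfl fun i _ => by ring
      rw [h3]
      simp only [T, ← Finset.mul_sum]
      have h4 : ∀ i : Fin n, a ∘ (π * Equiv.swap 0 i.succ : Equiv.Perm _) =
        (a ∘ π) ∘ Equiv.swap 0 i.succ := fun i => rfl
      simp only [h4]
      have h5 : ∀ X : ℂ, (Fintype.card d : ℂ)⁻¹ * ((Fintype.card d : ℂ) ^ (n + 1) * X) =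
          (Fintype.card d : ℂ) ^ n * X := fun X => by field_simp; ring
      rw [h5]
      simp only [of_apply]
      rw [mul_add, add_sub_right_comm, add_sub_cancel_right, pow_succ, mul_assoc]
      rfl
    have hbound : m ≤ 4 * (n : ℝ) ^ 2 / D * S + D⁻¹ * (n * (m + S)) := by
      have hswap : ∀ i : Fin n, ‖T (a ∘ (π * Equiv.swap 0 i.succ : Equiv.Perm _))‖ ≤ m + S := by
        intro i
        have h1 := hπ (π * Equiv.swap 0 i.succ)
        have h2 := hH (π * Equiv.swap 0 i.succ)
        have h3 := norm_add_le (T (a ∘ (π * Equiv.swap 0 i.succ : Equiv.Perm _)) -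
          H (a ∘ (π * Equiv.swap 0 i.succ : Equiv.Perm _)))
          (H (a ∘ (π * Equiv.swap 0 i.succ : Equiv.Perm _)))
        rw [sub_add_cancel] at h3
        linarith
      refine (congrArg norm hrec).le.trans ((norm_sub_le _ _).trans (add_le_add ?_ ?_))
      · rw [← hSperm π, permanent_succ, Finset.mul_sum]
        refine (norm_sum_le _ _).trans (Finset.sum_le_sum fun i _ => ?_)
        rw [norm_mul, norm_mul, mul_left_comm]
        refine mul_le_mul (mul_le_of_le_one_right (norm_nonneg _) (hxz _ _))
          (ih hn' _ _ _ _ fun i j => hxz _ _) (norm_nonneg _)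
          (by rw [of_apply]; exact norm_nonneg _)
      · rw [norm_mul, norm_inv, Complex.norm_natCast]
        refine mul_le_mul_of_nonneg_left ((norm_sum_le _ _).trans ?_) (by positivity)
        refine (Finset.sum_le_sum fun i _ => hswap i).trans ?_
        simp [mul_add]
    have hfin : m ≤ 4 * ((n : ℝ) + 1) ^ 2 / D * S := by
      rw [div_mul_eq_mul_div, le_div_iff₀ hD0]
      have hb : m * D ≤ 4 * (n : ℝ) ^ 2 * S + n * (m + S) := by
        have := mul_le_mul_of_nonneg_right hbound hD0.le
        field_simp at this
        linarith
      have hn0 : (0 : ℝ) ≤ n := Nat.cast_nonneg n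
      have hm0 : 0 ≤ m := norm_nonneg _
      have hmS : m ≤ 2 * S := by
        have : m * (D - n) ≤ 2 * S * (D - n) := by nlinarith
        exact le_of_mul_le_mul_right this (by nlinarith)
      nlinarith
    push_cast
    exact (hπ 1).trans hfin

omit [DecidableEq d] in
lemma norm_star_dotProduct_le_one {u v : d → ℂ} (hu : star u ⬝ᵥ u = 1) (hv : star v ⬝ᵥ v = 1) :
    ‖star u ⬝ᵥ v‖ ≤ 1 := by
  have hn : ∀ w : d → ℂ, star w ⬝ᵥ w = 1 → ‖WithLp.toLp 2 w‖ = 1 := fun w hw => by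
    rw [star_dotProduct_self_eq_ofReal, Complex.ofReal_eq_one] at hw
    rw [EuclideanSpace.norm_eq]
    simpa using hw
  have h := norm_inner_le_norm (𝕜 := ℂ) (WithLp.toLp 2 u) (WithLp.toLp 2 v)
  rwa [EuclideanSpace.inner_eq_star_dotProduct, dotProduct_comm, hn u hu, hn v hv, one_mul] at h

lemma exists_pure_decomposition {ρ : Matrix d d ℂ} (hρ : ρ.PosSemidef) (htr : ρ.trace = 1) :
    ∃ (p : d → ℝ) (u : d → d → ℂ), (∀ j, 0 ≤ p j) ∧ ∑ j, p j = 1 ∧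
      (∀ j, star (u j) ⬝ᵥ u j = 1) ∧
      ρ = ∑ j, (p j : ℂ) • vecMulVec (u j) (star (u j)) := by
  refine ⟨hρ.1.eigenvalues, fun j i => (hρ.1.eigenvectorUnitary : Matrix d d ℂ) i j,
    hρ.eigenvalues_nonneg, ?_, fun j => ?_, ?_⟩
  · have h := hρ.1.trace_eq_sum_eigenvalues
    rw [htr] at h
    apply Complex.ofReal_injective
    simpa using h.symm
  · have h := congrFun (congrFun (mem_unitaryGroup_iff'.mp hρ.1.eigenvectorUnitary.2) j) j
    simpa [mul_apply, dotProduct] using h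
  · conv_lhs => rw [hρ.1.spectral_theorem]
    ext i j
    rw [Unitary.conjStarAlgAut_apply, mul_apply, Matrix.sum_apply]
    refine Finset.sum_congr rfl fun e _ => ?_
    simp only [mul_diagonal, Matrix.smul_apply, vecMulVec_apply, Pi.star_apply, smul_eq_mul,
      star_apply, Function.comp_apply]
    simp
    ring

/-- The expected outcome weights of a sequence of measurements of Haar-rotated states are
`1 / D ^ k` up to the off-diagonal part of the permanent of the Gram matrix. -/
lemma norm_integral_prod_sub_one_le {k : ℕ} (hk : 4 * (k : ℝ) ^ 2 ≤ Fintype.card d)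
    (hd : 0 < Fintype.card d) (y : Fin k → d → ℂ) (hy : ∀ i, star (y i) ⬝ᵥ y i = 1)
    (ρ : Fin k → Matrix d d ℂ) (hρ : ∀ i, (ρ i).PosSemidef ∧ (ρ i).trace = 1) :
    ‖(Fintype.card d : ℂ) ^ k * ∫ U : unitaryGroup d ℂ,
        ∏ i, star (y i) ⬝ᵥ ((U.1 * ρ i * U.1ᴴ) *ᵥ y i) ∂μ - 1‖ ≤
      ∑ σ : Equiv.Perm (Fin k), (4 * (k : ℝ) ^ 2 / Fintype.card d + if σ = 1 then 0 else 1) *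
        ∏ i, ‖star (y i) ⬝ᵥ y (σ i)‖ := by
  choose p u hp hsum hu hdec using fun i => exists_pure_decomposition (hρ i).1 (hρ i).2
  set B := ∑ σ : Equiv.Perm (Fin k), (4 * (k : ℝ) ^ 2 / Fintype.card d + if σ = 1 then 0 else 1) *
        ∏ i, ‖star (y i) ⬝ᵥ y (σ i)‖ with hB
  have hpure : ∀ J : Fin k → d, ‖(Fintype.card d : ℂ) ^ k * unitaryMoment μ (fun i => star (y i)) y
      (fun i => u i (J i)) (fun i => star (u i (J i))) - 1‖ ≤ B := by
    intro J
    have h := norm_unitaryMoment_sub_permanent_le (μ := μ) k hk hd (fun i => star (y i)) y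
      (fun i => u i (J i)) (fun i => star (u i (J i)))
      (fun i j => norm_star_dotProduct_le_one (hu _ _) (hu _ _))
    set H := (of fun i j => (star (y j) ⬝ᵥ y i) *
      (star (u i (J i)) ⬝ᵥ u j (J j))).permanent with hH
    have hH1 : ‖H - 1‖ ≤ ∑ σ : Equiv.Perm (Fin k), (if σ = 1 then 0 else 1) *
        ∏ i, ‖star (y i) ⬝ᵥ y (σ i)‖ := by
      have h1 : H - 1 = ∑ σ : Equiv.Perm (Fin k), if σ = 1 then 0 else
          ∏ i, (star (y i) ⬝ᵥ y (σ i)) * (star (u (σ i) (J (σ i))) ⬝ᵥ u i (J i)) := by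
        rw [hH, permanent, ← Finset.add_sum_erase _ _ (Finset.mem_univ 1),
          ← Finset.add_sum_erase _ (fun σ : Equiv.Perm (Fin k) => ite (σ = 1) _ _)
            (Finset.mem_univ 1)]
        have h2 : ∏ i, (of fun i j => (star (y j) ⬝ᵥ y i) *
            (star (u i (J i)) ⬝ᵥ u j (J j))) ((1 : Equiv.Perm (Fin k)) i) i = 1 :=
          Finset.prod_eq_one fun i _ => by simp [hy, hu]
        rw [h2, if_pos rfl, zero_add, add_sub_cancel_left]
        exact Finset.sum_congr rfl fun σ hσ => by
          rw [if_neg (Finset.ne_of_mem_erase hσ)]; rfl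
      rw [h1]
      refine (norm_sum_le _ _).trans (Finset.sum_le_sum fun σ _ => ?_)
      split_ifs
      · simp
      · rw [norm_prod, one_mul]
        refine Finset.prod_le_prod (fun _ _ => norm_nonneg _) fun i _ => ?_
        rw [norm_mul]
        exact mul_le_of_le_one_right (norm_nonneg _) (norm_star_dotProduct_le_one (hu _ _) (hu _ _))
    refine (norm_sub_le_norm_sub_add_norm_sub _ H _).trans ((add_le_add h hH1).trans ?_)
    rw [hB]
    simp only [add_mul, Finset.sum_add_distrib, ← Finset.mul_sum]
    rfl
  have hexp : ∀ U : unitaryGroup d ℂ, ∏ i, star (y i) ⬝ᵥ ((U.1 * ρ i * U.1ᴴ) *ᵥ y i) =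
      ∑ J : Fin k → d, ((∏ i, p i (J i) : ℝ) : ℂ) * ((∏ i, star (y i) ⬝ᵥ (U.1 *ᵥ u i (J i))) *
        ∏ i, star (u i (J i)) ⬝ᵥ (U.1ᴴ *ᵥ y i)) := by
    intro U
    have h1 : ∀ i, star (y i) ⬝ᵥ ((U.1 * ρ i * U.1ᴴ) *ᵥ y i) =
        ∑ j, (p i j : ℂ) * ((star (y i) ⬝ᵥ (U.1 *ᵥ u i j)) *
          (star (u i j) ⬝ᵥ (U.1ᴴ *ᵥ y i))) := by
      intro i
      conv_lhs => rw [hdec i]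
      rw [← mulVec_mulVec, ← mulVec_mulVec, sum_mulVec, mulVec_sum, dotProduct_sum]
      refine Finset.sum_congr rfl fun j _ => ?_
      rw [smul_mulVec, mulVec_smul, dotProduct_smul, dotProduct_mulVec_vecMulVec_mulVec, smul_eq_mul]
    simp only [h1]
    rw [Fintype.prod_sum]
    refine Finset.sum_congr rfl fun J _ => ?_
    simp only [Finset.prod_mul_distrib, Complex.ofReal_prod]
  have hint : ∫ U : unitaryGroup d ℂ, ∏ i, star (y i) ⬝ᵥ ((U.1 * ρ i * U.1ᴴ) *ᵥ y i) ∂μ =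
      ∑ J : Fin k → d, ((∏ i, p i (J i) : ℝ) : ℂ) * unitaryMoment μ (fun i => star (y i)) y
      (fun i => u i (J i)) (fun i => star (u i (J i))) := by
    simp only [hexp]
    rw [integral_finsetSum]
    · simp only [integral_const_mul]
      rfl
    · intro J _
      refine (Continuous.integrable_of_compactSpace ?_).const_mul _
      fun_prop
  have hP : ∑ J : Fin k → d, ∏ i, p i (J i) = 1 := by
    rw [← Fintype.prod_sum]
    simp [hsum]
  have hP0 : ∀ J : Fin k → d, 0 ≤ ∏ i, p i (J i) := fun J => Finset.prod_nonneg fun i _ => hp _ _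
  have hsplit : (Fintype.card d : ℂ) ^ k * ∫ U : unitaryGroup d ℂ,
        ∏ i, star (y i) ⬝ᵥ ((U.1 * ρ i * U.1ᴴ) *ᵥ y i) ∂μ - 1 =
      ∑ J : Fin k → d, ((∏ i, p i (J i) : ℝ) : ℂ) *
        ((Fintype.card d : ℂ) ^ k * unitaryMoment μ (fun i => star (y i)) y
          (fun i => u i (J i)) (fun i => star (u i (J i))) - 1) := by
    have hP' : ∑ J : Fin k → d, ((∏ i, p i (J i) : ℝ) : ℂ) = 1 := by exact_mod_cast hP
    rw [hint]
    simp only [mul_sub, mul_one, Finset.sum_sub_distrib, hP', Finset.mul_sum, mul_left_comm]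
  rw [hsplit]
  refine (norm_sum_le _ _).trans ?_
  calc _ ≤ ∑ J : Fin k → d, (∏ i, p i (J i)) * B := Finset.sum_le_sum fun J _ => by
        rw [norm_mul, Complex.norm_real, Real.norm_of_nonneg (hP0 J)]
        exact mul_le_mul_of_nonneg_left (hpure J) (hP0 J)
    _ = B := by rw [← Finset.sum_mul, hP, one_mul]

end Haar

lemma sum_prod_le_of_adapted {α : Type*} [Fintype α] [Nonempty α] :
    ∀ (n : ℕ) (f : Fin n → (Fin n → α) → ℝ) (c : Fin n → ℝ), (∀ i s, 0 ≤ f i s) →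
      (∀ i s s', (∀ j, j ≤ i → s j = s' j) → f i s = f i s') →
      (∀ i s, ∑ t, f i (Function.update s i t) ≤ c i) →
      ∑ s, ∏ i, f i s ≤ ∏ i, c i := by
  intro n
  induction n with
  | zero => intro f c _ _ _; simp
  | succ n ih =>
    intro f c hf hadapt hc
    have hc0 : ∀ i, 0 ≤ c i := fun i =>
      (Finset.sum_nonneg fun t _ => hf i _).trans (hc i fun _ => Classical.arbitrary α)
    rw [← (Fin.consEquiv fun _ => α).sum_comp, Fintype.sum_prod_type, Fin.prod_univ_succ]
    let s₀ : Fin n → α := fun _ => Classical.arbitrary α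
    have hinner : ∀ a : α, ∑ s : Fin n → α, ∏ i : Fin n, f i.succ (Fin.cons a s : Fin (n + 1) → α)
        ≤ ∏ i : Fin n, c i.succ := by
      intro a
      refine ih (fun i s => f i.succ (Fin.cons a s : Fin (n + 1) → α)) _ (fun i s => hf _ _)
        (fun i s s' h => hadapt _ _ _ fun j => ?_) fun i s => ?_
      · refine Fin.cases (fun _ => by simp) (fun j hj => ?_) j
        simpa using h j (Fin.succ_le_succ_iff.mp hj)
      · simpa only [Fin.cons_update] using hc i.succ (Fin.cons a s)
    calc _ = ∑ a, f 0 (Fin.cons a s₀ : Fin (n + 1) → α) * ∑ s : Fin n → α, ∏ i : Fin n,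
            f i.succ (Fin.cons a s : Fin (n + 1) → α) := by
          refine Finset.sum_congr rfl fun a _ => ?_
          rw [Finset.mul_sum]
          refine Finset.sum_congr rfl fun s _ => ?_
          rw [Fin.prod_univ_succ]
          congr 1
          refine hadapt _ _ _ fun j hj => ?_
          rw [Fin.le_zero_iff.mp hj]
          simp
      _ ≤ ∑ a, f 0 (Fin.cons a s₀ : Fin (n + 1) → α) * ∏ i : Fin n, c i.succ :=
          Finset.sum_le_sum fun a _ => mul_le_mul_of_nonneg_left (hinner a) (hf _ _)
      _ ≤ _ := by
          rw [← Finset.sum_mul]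
          refine mul_le_mul_of_nonneg_right ?_ (Finset.prod_nonneg fun i _ => hc0 _)
          have := hc 0 (Fin.cons (Classical.arbitrary α) s₀)
          simpa only [Fin.update_cons_zero] using this

lemma prod_ite_lt_mul_prod_ite_lt {M : Type*} [CommMonoid M] {k : ℕ} (σ : Equiv.Perm (Fin k))
    (g : Fin k → Fin k → M) (hg : ∀ i, g i i = 1) :
    ∏ t, ((if σ t < t then g t (σ t) else 1) * (if σ⁻¹ t < t then g (σ⁻¹ t) t else 1)) =
      ∏ i, g i (σ i) := by
  rw [Finset.prod_mul_distrib, ← Equiv.prod_comp σ fun t => if σ⁻¹ t < t then g (σ⁻¹ t) t else 1,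
    ← Finset.prod_mul_distrib]
  refine Finset.prod_congr rfl fun i _ => ?_
  rw [show σ⁻¹ (σ i) = i from σ.symm_apply_apply i]
  rcases lt_trichotomy (σ i) i with h | h | h
  · simp [h, h.not_gt]
  · simp [h, hg]
  · simp [h, h.not_gt]

lemma card_filter_support_eq_le {k : ℕ} (T : Finset (Fin k)) :
    (Finset.univ.filter fun σ : Equiv.Perm (Fin k) => σ.support = T).card ≤ T.card.factorial := by
  have h : Fintype.card {f : Equiv.Perm (Fin k) // ∀ a, ¬ a ∈ T → f a = a} = T.card.factorial := by
    rw [← Fintype.card_congr (Equiv.Perm.subtypeEquivSubtypePerm (· ∈ T)), Fintype.card_perm]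
    simp
  rw [← h, Fintype.card_subtype]
  refine Finset.card_le_card fun σ hσ => ?_
  simp only [Finset.mem_filter, Finset.mem_univ, true_and] at hσ ⊢
  intro a ha
  rwa [← hσ, Equiv.Perm.notMem_support] at ha

lemma sum_pow_card_support_le {k : ℕ} {q : ℝ} (hq : 0 ≤ q) (hkq : k * q ≤ 1 / 2) :
    ∑ σ : Equiv.Perm (Fin k), q ^ σ.support.card ≤ 1 + 2 * (k * q) ^ 2 := by
  obtain ⟨h, hdef⟩ : ∃ h : ℕ → ℝ, ∀ j, h j = if j = 1 then 0 else j.factorial * q ^ j :=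
    ⟨_, fun _ => rfl⟩
  have hh : ∀ j, 0 ≤ h j := fun j => by rw [hdef]; split_ifs <;> positivity
  set r := k * q with hr
  have hr0 : 0 ≤ r := by positivity
  have hchoose : ∀ j, k.choose j * h j ≤ r ^ j := by
    intro j
    rw [hdef]
    split_ifs
    · simp only [mul_zero]; positivity
    · rw [hr, mul_pow, ← mul_assoc]
      refine mul_le_mul_of_nonneg_right ?_ (by positivity)
      rw [mul_comm]
      exact_mod_cast (Nat.descFactorial_eq_factorial_mul_choose k j).symm.le.trans
        (Nat.descFactorial_le_pow k j)
  have hgeom : ∀ N, ∑ j ∈ Finset.range (N + 2), k.choose j * h j ≤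
      1 + 2 * r ^ 2 - 2 * r ^ (N + 2) := by
    intro N
    induction N with
    | zero => simp [Finset.sum_range_succ, hdef]
    | succ N ih =>
      rw [Finset.sum_range_succ]
      have h1 := hchoose (N + 2)
      have h2 : r ^ (N + 1 + 2) = r ^ (N + 2) * r := by ring
      nlinarith [pow_nonneg hr0 (N + 2)]
  calc ∑ σ : Equiv.Perm (Fin k), q ^ σ.support.card
      = ∑ T : Finset (Fin k), ∑ σ : Equiv.Perm (Fin k) with σ.support = T, q ^ σ.support.card :=
        (Finset.sum_fiberwise Finset.univ (fun σ : Equiv.Perm (Fin k) => σ.support)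
          fun σ => q ^ σ.support.card).symm
    _ ≤ ∑ T : Finset (Fin k), h T.card := by
        refine Finset.sum_le_sum fun T _ => ?_
        rw [hdef]
        split_ifs with h1
        · refine (Finset.sum_eq_zero fun σ hσ => ?_).le
          rw [← (Finset.mem_filter.mp hσ).2] at h1
          exact absurd h1 σ.card_support_ne_one
        · rw [Finset.sum_congr rfl fun σ hσ => by rw [(Finset.mem_filter.mp hσ).2],
            Finset.sum_const, nsmul_eq_mul]
          exact mul_le_mul_of_nonneg_right (by exact_mod_cast card_filter_support_eq_le T)
            (by positivity)
    _ = ∑ j ∈ Finset.range (k + 1), k.choose j * h j := by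
        rw [← Finset.powerset_univ, Finset.sum_powerset_apply_card]
        simp
    _ ≤ ∑ j ∈ Finset.range (k + 2), k.choose j * h j :=
        Finset.sum_le_sum_of_subset_of_nonneg (Finset.range_mono (by omega))
          fun j _ _ => mul_nonneg (by positivity) (hh j)
    _ ≤ _ := (hgeom k).trans (by linarith [pow_nonneg hr0 (k + 2)])

lemma sum_mul_mul_le_of_sq {ι : Type*} [Fintype ι] {w A B : ι → ℝ} {α β : ℝ} (hw : ∀ t, 0 ≤ w t)
    (hα : 0 ≤ α) (hβ : 0 ≤ β) (hA : ∑ t, w t * A t ^ 2 ≤ α ^ 2) (hB : ∑ t, w t * B t ^ 2 ≤ β ^ 2) :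
    ∑ t, w t * (A t * B t) ≤ α * β := by
  refine abs_le_of_sq_le_sq' ?_ (mul_nonneg hα hβ) |>.2
  calc _ = (∑ t, (√(w t) * A t) * (√(w t) * B t)) ^ 2 := by
        congr 1
        refine Finset.sum_congr rfl fun t _ => ?_
        rw [mul_mul_mul_comm, Real.mul_self_sqrt (hw t)]
    _ ≤ (∑ t, (√(w t) * A t) ^ 2) * ∑ t, (√(w t) * B t) ^ 2 :=
        Finset.sum_mul_sq_le_sq_mul_sq _ _ _
    _ = (∑ t, w t * A t ^ 2) * ∑ t, w t * B t ^ 2 := by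
        simp only [mul_pow, Real.sq_sqrt (hw _)]
    _ ≤ α ^ 2 * β ^ 2 := mul_le_mul hA hB
        (Finset.sum_nonneg fun t _ => mul_nonneg (hw t) (sq_nonneg _)) (sq_nonneg _)
    _ = (α * β) ^ 2 := by ring

section Povm

variable {d ι : Type*} [Fintype d] [DecidableEq d] [Fintype ι] {w : ι → ℝ} {v : ι → d → ℂ}

lemma sum_mul_dotProduct_mulVec_of_povm
    (h : ∑ t, (w t : ℂ) • vecMulVec (v t) (star (v t)) = 1) (ρ : Matrix d d ℂ) :
    ∑ t, (w t : ℂ) * (star (v t) ⬝ᵥ (ρ *ᵥ v t)) = ρ.trace := by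
  conv_rhs => rw [← mul_one ρ, ← h, Finset.mul_sum, trace_sum]
  refine Finset.sum_congr rfl fun t _ => ?_
  rw [mul_smul_comm, trace_smul, mul_vecMulVec, trace_vecMulVec, dotProduct_comm, smul_eq_mul]

lemma sum_weight_of_povm (h : ∑ t, (w t : ℂ) • vecMulVec (v t) (star (v t)) = 1)
    (hv : ∀ t, star (v t) ⬝ᵥ v t = 1) : ∑ t, w t = Fintype.card d := by
  have := sum_mul_dotProduct_mulVec_of_povm h 1
  simp only [one_mulVec, hv, mul_one, trace_one] at this
  exact_mod_cast this

lemma sum_weight_mul_norm_sq_of_povm (h : ∑ t, (w t : ℂ) • vecMulVec (v t) (star (v t)) = 1)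
    {a : d → ℂ} (ha : star a ⬝ᵥ a = 1) : ∑ t, w t * ‖star a ⬝ᵥ v t‖ ^ 2 = 1 := by
  have := sum_mul_dotProduct_mulVec_of_povm h (vecMulVec a (star a))
  rw [trace_vecMulVec, dotProduct_comm, ha] at this
  apply Complex.ofReal_injective
  rw [Complex.ofReal_one, ← this]
  push_cast
  refine Finset.sum_congr rfl fun t _ => ?_
  rw [dotProduct_vecMulVec_mulVec, ← Complex.conj_mul', ← Complex.star_def, ← star_dotProduct_star,
    star_star, dotProduct_comm]

lemma sum_weight_mul_norm_of_povm (h : ∑ t, (w t : ℂ) • vecMulVec (v t) (star (v t)) = 1)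
    {ρ : Matrix d d ℂ} (hρ : ρ.PosSemidef) (htr : ρ.trace = 1) :
    ∑ t, w t * ‖star (v t) ⬝ᵥ (ρ *ᵥ v t)‖ = 1 := by
  apply Complex.ofReal_injective
  rw [Complex.ofReal_one, ← htr, ← sum_mul_dotProduct_mulVec_of_povm h ρ]
  push_cast
  refine Finset.sum_congr rfl fun t _ => ?_
  rw [← RCLike.norm_of_nonneg' (hρ.dotProduct_mulVec_nonneg (v t))]
  simp

omit [DecidableEq d] in
lemma norm_star_dotProduct_comm (a b : d → ℂ) : ‖star a ⬝ᵥ b‖ = ‖star b ⬝ᵥ a‖ := by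
  rw [← norm_star (star a ⬝ᵥ b), ← star_dotProduct_star, star_star, dotProduct_comm]

lemma sum_weight_div_card_mul_ite_sq_of_povm
    (h : ∑ t, (w t : ℂ) • vecMulVec (v t) (star (v t)) = 1) (hd : 0 < Fintype.card d)
    (hv : ∀ t, star (v t) ⬝ᵥ v t = 1) {a : d → ℂ} (ha : star a ⬝ᵥ a = 1)
    (p : Prop) [Decidable p] :
    ∑ t, w t / Fintype.card d * (if p then ‖star a ⬝ᵥ v t‖ else 1) ^ 2 =
      (if p then (√(Fintype.card d))⁻¹ else 1) ^ 2 := by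
  have hd' : (0 : ℝ) < Fintype.card d := by exact_mod_cast hd
  split_ifs
  · simp only [div_mul_eq_mul_div, ← Finset.sum_div, sum_weight_mul_norm_sq_of_povm h ha, inv_pow,
      Real.sq_sqrt hd'.le, one_div]
  · simp only [one_pow, mul_one, ← Finset.sum_div, sum_weight_of_povm h hv, div_self hd'.ne']

end Povm

section Adaptive

variable {d α : Type*} [Fintype d] [DecidableEq d] [Fintype α] [Nonempty α] {k : ℕ}

omit [Fintype d] [DecidableEq d] in
lemma sum_mul_prod_le_of_adapted {f₀ : (Fin (k + 1) → α) → ℝ} (hf₀ : ∀ s, 0 ≤ f₀ s)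
    (hf₀' : ∀ s s', s 0 = s' 0 → f₀ s = f₀ s') (hsum : ∀ s, ∑ t, f₀ (Function.update s 0 t) ≤ 1)
    (f : Fin k → (Fin (k + 1) → α) → ℝ) (c : Fin k → ℝ) (hf : ∀ i s, 0 ≤ f i s)
    (hf' : ∀ i s s', (∀ j, j ≤ i.succ → s j = s' j) → f i s = f i s')
    (hc : ∀ i s, ∑ t, f i (Function.update s i.succ t) ≤ c i) :
    ∑ s, f₀ s * ∏ i, f i s ≤ ∏ i, c i := by
  have h := sum_prod_le_of_adapted (k + 1) (Fin.cons f₀ f : Fin (k + 1) → _ → ℝ)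
    (Fin.cons 1 c : Fin (k + 1) → ℝ)
    (fun i => Fin.cases hf₀ hf i)
    (fun i => Fin.cases (fun s s' h => hf₀' s s' (h 0 le_rfl)) hf' i)
    (fun i => Fin.cases hsum hc i)
  simpa only [Fin.prod_univ_succ, Fin.cons_zero, Fin.cons_succ, one_mul] using h

omit [Fintype α] [Nonempty α] in
lemma eq_update_of_adapted {β : Type*} {g : Fin (k + 1) → (Fin (k + 1) → α) → β}
    (hg : ∀ i s s', (∀ j, j ≤ i → s j = s' j) → g i s = g i s') {i j : Fin (k + 1)} (hij : i < j)
    (s : Fin (k + 1) → α) (t : α) : g i (Function.update s j t) = g i s :=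
  hg _ _ _ fun _ hl => Function.update_of_ne (hl.trans_lt hij).ne _ _

variable {y : Fin (k + 1) → (Fin (k + 1) → α) → d → ℂ} {lam : Fin (k + 1) → (Fin (k + 1) → α) → ℝ}
  {f₀ : (Fin (k + 1) → α) → ℝ}

lemma sum_mul_prod_weight_mul_prod_norm_le (hd : 0 < Fintype.card d)
    (hf₀ : ∀ s, 0 ≤ f₀ s) (hf₀' : ∀ s s', s 0 = s' 0 → f₀ s = f₀ s')
    (hsum : ∀ s, ∑ t, f₀ (Function.update s 0 t) ≤ 1)
    (hy : ∀ i s, star (y i s) ⬝ᵥ y i s = 1) (hlam : ∀ i s, 0 ≤ lam i s)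
    (hy' : ∀ i s s', (∀ j, j ≤ i → s j = s' j) → y i s = y i s')
    (hlam' : ∀ i s s', (∀ j, j ≤ i → s j = s' j) → lam i s = lam i s')
    (hpovm : ∀ i s, ∑ t, (lam i (Function.update s i t) : ℂ) •
      vecMulVec (y i (Function.update s i t)) (star (y i (Function.update s i t))) = 1)
    (σ : Equiv.Perm (Fin k)) :
    ∑ s, f₀ s * ((∏ i : Fin k, lam i.succ s / Fintype.card d) *
        ∏ i : Fin k, ‖star (y i.succ s) ⬝ᵥ y (σ i).succ s‖) ≤
      (√(Fintype.card d : ℝ))⁻¹ ^ σ.support.card := by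
  set q : ℝ := (√(Fintype.card d : ℝ))⁻¹ with hq
  have hq0 : 0 ≤ q := by positivity
  have h := sum_mul_prod_le_of_adapted hf₀ hf₀' hsum
    (fun i s => lam i.succ s / Fintype.card d *
      ((if σ i < i then ‖star (y i.succ s) ⬝ᵥ y (σ i).succ s‖ else 1) *
        (if σ⁻¹ i < i then ‖star (y (σ⁻¹ i).succ s) ⬝ᵥ y i.succ s‖ else 1)))
    (fun i => (if σ i < i then q else 1) * (if σ⁻¹ i < i then q else 1)) ?_ ?_ ?_
  · have hprod : ∏ i, ((if σ i < i then q else 1) * (if σ⁻¹ i < i then q else 1)) =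
        q ^ σ.support.card := by
      have h1 := prod_ite_lt_mul_prod_ite_lt σ (fun i j => if i = j then 1 else q) (by simp)
      rw [Finset.prod_ite, Finset.prod_const_one, one_mul, Finset.prod_const] at h1
      have h2 : ({x | ¬x = σ x} : Finset (Fin k)) = σ.support := by
        ext x; simp [eq_comm]
      rw [← h2, ← h1]
      refine Finset.prod_congr rfl fun i _ => ?_
      congr 1
      · exact if_ctx_congr Iff.rfl (fun h => (if_neg h.ne').symm) fun _ => rfl
      · exact if_ctx_congr Iff.rfl (fun h => (if_neg h.ne).symm) fun _ => rfl
    rw [hprod] at h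
    refine (Finset.sum_congr rfl fun s _ => ?_).trans_le h
    rw [Finset.prod_mul_distrib, prod_ite_lt_mul_prod_ite_lt σ
      (fun i j => ‖star (y i.succ s) ⬝ᵥ y j.succ s‖) fun i => by simp [hy]]
  · intro i s
    have := hlam i.succ s
    positivity
  · intro i s s' hs
    have h1 : ∀ j : Fin k, j < i → y j.succ s = y j.succ s' := fun j hj =>
      hy' _ _ _ fun l hl => hs l (hl.trans (Fin.succ_le_succ_iff.mpr hj.le))
    have h2 := hy' _ _ _ hs
    have h3 := hlam' _ _ _ hs
    simp only [h2, h3]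
    congr 2
    · exact if_ctx_congr Iff.rfl (fun h => by rw [h1 _ h]) fun _ => rfl
    · exact if_ctx_congr Iff.rfl (fun h => by rw [h1 _ h]) fun _ => rfl
  · intro i s
    have hup : ∀ (j : Fin k) t, j < i → y j.succ (Function.update s i.succ t) = y j.succ s :=
      fun j t hj => eq_update_of_adapted hy' (Fin.succ_lt_succ_iff.mpr hj) s t
    have hstep := fun j => sum_weight_div_card_mul_ite_sq_of_povm (hpovm i.succ s) hd
      (fun t => hy _ _) (hy (Fin.succ j) s)
    refine (Finset.sum_congr rfl fun t _ => ?_).trans_le (sum_mul_mul_le_of_sq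
      (fun t => div_nonneg (hlam _ _) (Nat.cast_nonneg _)) (by positivity) (by positivity)
      (hstep (σ i) (σ i < i)).le (hstep (σ⁻¹ i) (σ⁻¹ i < i)).le)
    congr 2
    · exact if_ctx_congr Iff.rfl
        (fun h => by rw [hup _ _ h, norm_star_dotProduct_comm]) fun _ => rfl
    · exact if_ctx_congr Iff.rfl (fun h => by rw [hup _ _ h]) fun _ => rfl

variable {sig : Fin k → (Fin (k + 1) → α) → Matrix d d ℂ} {μ : Measure (unitaryGroup d ℂ)}
  [IsProbabilityMeasure μ] [μ.IsMulLeftInvariant]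

/-- Total variation bound in the regime `4 k ^ 2 ≤ D`. -/
lemma sum_mul_prod_weight_mul_norm_sub_le (hk : 4 * (k : ℝ) ^ 2 ≤ Fintype.card d)
    (hd : 0 < Fintype.card d)
    (hf₀ : ∀ s, 0 ≤ f₀ s) (hf₀' : ∀ s s', s 0 = s' 0 → f₀ s = f₀ s')
    (hsum : ∀ s, ∑ t, f₀ (Function.update s 0 t) ≤ 1)
    (hy : ∀ i s, star (y i s) ⬝ᵥ y i s = 1) (hlam : ∀ i s, 0 ≤ lam i s)
    (hy' : ∀ i s s', (∀ j, j ≤ i → s j = s' j) → y i s = y i s')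
    (hlam' : ∀ i s s', (∀ j, j ≤ i → s j = s' j) → lam i s = lam i s')
    (hpovm : ∀ i s, ∑ t, (lam i (Function.update s i t) : ℂ) •
      vecMulVec (y i (Function.update s i t)) (star (y i (Function.update s i t))) = 1)
    (hsig : ∀ i s, (sig i s).PosSemidef ∧ (sig i s).trace = 1) :
    ∑ s, f₀ s * ((∏ i : Fin k, lam i.succ s) * ‖((Fintype.card d : ℂ) ^ k)⁻¹ -
        ∫ U : unitaryGroup d ℂ,
          ∏ i, star (y i.succ s) ⬝ᵥ ((U.1 * sig i s * U.1ᴴ) *ᵥ y i.succ s) ∂μ‖) ≤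
      8 * (k : ℝ) ^ 2 / Fintype.card d := by
  have hD : (0 : ℝ) < Fintype.card d := by exact_mod_cast hd
  have hne : (Fintype.card d : ℂ) ^ k ≠ 0 := pow_ne_zero _ (by exact_mod_cast hd.ne')
  have hterm : ∀ s, f₀ s * ((∏ i : Fin k, lam i.succ s) * ‖((Fintype.card d : ℂ) ^ k)⁻¹ -
        ∫ U : unitaryGroup d ℂ,
          ∏ i, star (y i.succ s) ⬝ᵥ ((U.1 * sig i s * U.1ᴴ) *ᵥ y i.succ s) ∂μ‖) ≤
      ∑ σ : Equiv.Perm (Fin k), (4 * (k : ℝ) ^ 2 / Fintype.card d + if σ = 1 then 0 else 1) *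
        (f₀ s * ((∏ i : Fin k, lam i.succ s / Fintype.card d) *
          ∏ i : Fin k, ‖star (y i.succ s) ⬝ᵥ y (σ i).succ s‖)) := by
    intro s
    set I := ∫ U : unitaryGroup d ℂ,
      ∏ i, star (y i.succ s) ⬝ᵥ ((U.1 * sig i s * U.1ᴴ) *ᵥ y i.succ s) ∂μ with hI
    have h1 : ‖((Fintype.card d : ℂ) ^ k)⁻¹ - I‖ =
        ((Fintype.card d : ℝ) ^ k)⁻¹ * ‖(Fintype.card d : ℂ) ^ k * I - 1‖ := by
      rw [← norm_sub_rev, show I - ((Fintype.card d : ℂ) ^ k)⁻¹ =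
        ((Fintype.card d : ℂ) ^ k)⁻¹ * ((Fintype.card d : ℂ) ^ k * I - 1) by field_simp,
        norm_mul, norm_inv, norm_pow, Complex.norm_natCast]
    have h2 := norm_integral_prod_sub_one_le (μ := μ) hk hd (fun i => y i.succ s)
      (fun i => hy _ _) (fun i => sig i s) fun i => hsig i s
    rw [h1, ← mul_assoc (∏ i : Fin k, lam i.succ s), ← div_eq_mul_inv]
    have h3 : (∏ i : Fin k, lam i.succ s) / (Fintype.card d : ℝ) ^ k =
        ∏ i : Fin k, lam i.succ s / Fintype.card d := by
      simp [Finset.prod_div_distrib]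
    have h4 : 0 ≤ ∏ i : Fin k, lam i.succ s / (Fintype.card d : ℝ) :=
      Finset.prod_nonneg fun i _ => div_nonneg (hlam _ _) hD.le
    rw [h3]
    refine (mul_le_mul_of_nonneg_left (mul_le_mul_of_nonneg_left h2 h4) (hf₀ s)).trans_eq ?_
    simp only [Finset.mul_sum]
    exact Finset.sum_congr rfl fun σ _ => by ring
  have hσ := fun σ => sum_mul_prod_weight_mul_prod_norm_le hd hf₀ hf₀' hsum hy hlam hy' hlam'
    hpovm σ
  set D : ℝ := (Fintype.card d : ℝ) with hDdef
  set q : ℝ := (√D)⁻¹ with hq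
  have hq2 : q ^ 2 = D⁻¹ := by rw [hq, inv_pow, Real.sq_sqrt hD.le]
  have hq0 : 0 ≤ q := by positivity
  have hkq2 : (k * q) ^ 2 = k ^ 2 / D := by rw [mul_pow, hq2, div_eq_mul_inv]
  have hkq : k * q ≤ 1 / 2 := by
    refine abs_le_of_sq_le_sq' ?_ (by norm_num) |>.2
    rw [hkq2, div_le_iff₀ hD]
    linarith
  have hB := sum_pow_card_support_le hq0 hkq
  rw [hkq2] at hB
  set B := ∑ σ : Equiv.Perm (Fin k), q ^ σ.support.card with hBdef
  have hε : (k : ℝ) ^ 2 / D ≤ 1 / 4 := by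
    rw [div_le_iff₀ hD]; linarith
  calc _ ≤ ∑ s, ∑ σ : Equiv.Perm (Fin k), (4 * (k : ℝ) ^ 2 / D + if σ = 1 then 0 else 1) *
        (f₀ s * ((∏ i : Fin k, lam i.succ s / D) *
          ∏ i : Fin k, ‖star (y i.succ s) ⬝ᵥ y (σ i).succ s‖)) :=
        Finset.sum_le_sum fun s _ => hterm s
    _ ≤ ∑ σ : Equiv.Perm (Fin k), (4 * (k : ℝ) ^ 2 / D + if σ = 1 then 0 else 1) *
        q ^ σ.support.card := by
        rw [Finset.sum_comm]
        refine Finset.sum_le_sum fun σ _ => ?_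
        rw [← Finset.mul_sum]
        refine mul_le_mul_of_nonneg_left (hσ σ) (add_nonneg (by positivity) ?_)
        split_ifs <;> norm_num
    _ = 4 * (k : ℝ) ^ 2 / D * B + (B - 1) := by
        simp only [add_mul, Finset.sum_add_distrib, ← Finset.mul_sum]
        congr 1
        rw [hBdef, ← Finset.add_sum_erase _ _ (Finset.mem_univ 1), ← Finset.add_sum_erase _
          (fun σ : Equiv.Perm (Fin k) => q ^ σ.support.card) (Finset.mem_univ 1)]
        simp only [if_true, zero_mul, zero_add, Equiv.Perm.support_one, Finset.card_empty,
          pow_zero, add_sub_cancel_left]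
        exact Finset.sum_congr rfl fun σ hσ => by
          rw [if_neg (Finset.ne_of_mem_erase hσ), one_mul]
    _ ≤ _ := by
        have h0 : 0 ≤ (k : ℝ) ^ 2 / D := by positivity
        rw [mul_div_assoc, mul_div_assoc]
        nlinarith

omit [μ.IsMulLeftInvariant] in
/-- Trivial total variation bound: both measures have mass at most one. -/
lemma sum_mul_prod_weight_mul_norm_sub_le_two (hd : 0 < Fintype.card d)
    (hf₀ : ∀ s, 0 ≤ f₀ s) (hf₀' : ∀ s s', s 0 = s' 0 → f₀ s = f₀ s')
    (hsum : ∀ s, ∑ t, f₀ (Function.update s 0 t) ≤ 1)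
    (hy : ∀ i s, star (y i s) ⬝ᵥ y i s = 1) (hlam : ∀ i s, 0 ≤ lam i s)
    (hy' : ∀ i s s', (∀ j, j ≤ i → s j = s' j) → y i s = y i s')
    (hlam' : ∀ i s s', (∀ j, j ≤ i → s j = s' j) → lam i s = lam i s')
    (hpovm : ∀ i s, ∑ t, (lam i (Function.update s i t) : ℂ) •
      vecMulVec (y i (Function.update s i t)) (star (y i (Function.update s i t))) = 1)
    (hsig : ∀ i s, (sig i s).PosSemidef ∧ (sig i s).trace = 1)
    (hsig' : ∀ (i : Fin k) (s s' : Fin (k + 1) → α), (∀ j, j ≤ i.castSucc → s j = s' j) →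
      sig i s = sig i s') :
    ∑ s, f₀ s * ((∏ i : Fin k, lam i.succ s) * ‖((Fintype.card d : ℂ) ^ k)⁻¹ -
        ∫ U : unitaryGroup d ℂ,
          ∏ i, star (y i.succ s) ⬝ᵥ ((U.1 * sig i s * U.1ᴴ) *ᵥ y i.succ s) ∂μ‖) ≤ 2 := by
  have hD : (0 : ℝ) < Fintype.card d := by exact_mod_cast hd
  have hP : ∑ s, f₀ s * ∏ i : Fin k, lam i.succ s / (Fintype.card d : ℝ) ≤ 1 := by
    refine (sum_mul_prod_weight_mul_prod_norm_le hd hf₀ hf₀' hsum hy hlam hy' hlam' hpovm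
      1).trans' (Finset.sum_le_sum fun s _ => ?_) |>.trans ?_
    · simp [hy]
    · simp
  have hQ : ∀ U : unitaryGroup d ℂ, ∑ s, f₀ s * ∏ i : Fin k, lam i.succ s *
      ‖star (y i.succ s) ⬝ᵥ ((U.1 * sig i s * U.1ᴴ) *ᵥ y i.succ s)‖ ≤ 1 := by
    intro U
    have hU : U.1ᴴ * U.1 = 1 := by
      rw [← star_eq_conjTranspose]; exact mem_unitaryGroup_iff'.mp U.2
    refine (sum_mul_prod_le_of_adapted hf₀ hf₀' hsum (fun i s => lam i.succ s *
      ‖star (y i.succ s) ⬝ᵥ ((U.1 * sig i s * U.1ᴴ) *ᵥ y i.succ s)‖) (fun _ => 1)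
      (fun i s => mul_nonneg (hlam _ _) (norm_nonneg _)) ?_ ?_).trans_eq (by simp)
    · intro i s s' h
      have h1 := hsig' i s s' fun j hj => h j (hj.trans (Fin.castSucc_lt_succ).le)
      simp only [h1, hy' _ _ _ h, hlam' _ _ _ h]
    · intro i s
      refine (Finset.sum_congr rfl fun t _ => ?_).trans_le
        (sum_weight_mul_norm_of_povm (hpovm i.succ s)
          ((hsig i s).1.mul_mul_conjTranspose_same U.1) ?_).le
      · rw [hsig' i (Function.update s i.succ t) s fun j hj => Function.update_of_ne
          (hj.trans_lt Fin.castSucc_lt_succ).ne _ _]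
      · rw [trace_mul_comm, ← mul_assoc, hU, one_mul, (hsig i s).2]
  have hcont : ∀ s, Continuous fun U : unitaryGroup d ℂ => ∏ i : Fin k,
      star (y i.succ s) ⬝ᵥ ((U.1 * sig i s * U.1ᴴ) *ᵥ y i.succ s) := fun s => by fun_prop
  have hI : ∑ s, f₀ s * ((∏ i : Fin k, lam i.succ s) * ∫ U : unitaryGroup d ℂ,
      ‖∏ i, star (y i.succ s) ⬝ᵥ ((U.1 * sig i s * U.1ᴴ) *ᵥ y i.succ s)‖ ∂μ) ≤ 1 := by
    simp only [← mul_assoc, ← integral_const_mul]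
    have hint : ∀ s, Integrable (fun U : unitaryGroup d ℂ => f₀ s * (∏ i : Fin k, lam i.succ s) *
        ‖∏ i, star (y i.succ s) ⬝ᵥ ((U.1 * sig i s * U.1ᴴ) *ᵥ y i.succ s)‖) μ := fun s =>
      ((hcont s).norm.integrable_of_compactSpace).const_mul _
    rw [← integral_finsetSum _ fun s _ => hint s]
    refine (integral_mono (integrable_finsetSum _ fun s _ => hint s) (integrable_const 1)
      fun U => ?_).trans_eq (by simp)
    refine (Finset.sum_congr rfl fun s _ => ?_).trans_le (hQ U)
    rw [norm_prod, Finset.prod_mul_distrib, mul_assoc]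
  calc _ ≤ ∑ s, (f₀ s * (∏ i : Fin k, lam i.succ s / (Fintype.card d : ℝ)) +
        f₀ s * ((∏ i : Fin k, lam i.succ s) * ∫ U : unitaryGroup d ℂ,
          ‖∏ i, star (y i.succ s) ⬝ᵥ ((U.1 * sig i s * U.1ᴴ) *ᵥ y i.succ s)‖ ∂μ)) := by
        refine Finset.sum_le_sum fun s _ => ?_
        rw [← mul_add]
        refine mul_le_mul_of_nonneg_left ?_ (hf₀ s)
        have h1 : ∏ i : Fin k, lam i.succ s / (Fintype.card d : ℝ) =
            (∏ i : Fin k, lam i.succ s) * ‖((Fintype.card d : ℂ) ^ k)⁻¹‖ := by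
          simp [Finset.prod_mul_distrib, div_eq_mul_inv]
        rw [h1, ← mul_add]
        exact mul_le_mul_of_nonneg_left ((norm_sub_le _ _).trans
          (add_le_add_right (norm_integral_le_integral_norm _) _))
          (Finset.prod_nonneg fun i _ => hlam _ _)
    _ ≤ 2 := by rw [Finset.sum_add_distrib]; linarith

end Adaptive

/-- (Lemma 3.2 of the paper, unitary case.)  For the adaptive simple
measurement data `y, λ, σ` on `ℓ` qubits (`D = 2^ℓ`), if `k < (2^ℓ/√6)^{4/7}` then the
distribution `Q_k(s) = Pr(s₀) ∫_{U(D)} ∏_{i=1}^k ⟨y^i|U σ^{i−1} U†|y^i⟩ λ^i dU` is close in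
total variation to `P_k(s) = Pr(s₀) D^{−k} ∏_{i=1}^k λ^i`:
`∑_s |P_k(s) − Q_k(s)| ≤ C k³/2^ℓ` for a universal constant `C > 0`. -/
theorem simple_measurement_tvd_unitary :
    ∃ C : ℝ, 0 < C ∧
      ∀ (ℓ k Dm : ℕ), 1 ≤ ℓ → 1 ≤ k → 1 ≤ Dm →
      (k : ℝ) < ((2 : ℝ) ^ ℓ / Real.sqrt 6) ^ ((4 : ℝ) / 7) →
      ∀ (y : Fin (k + 1) → (Fin (k + 1) → Fin Dm) → (Fin (2 ^ ℓ) → ℂ))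
        (lam : Fin (k + 1) → (Fin (k + 1) → Fin Dm) → ℝ)
        (sig : Fin k → (Fin (k + 1) → Fin Dm) → Matrix (Fin (2 ^ ℓ)) (Fin (2 ^ ℓ)) ℂ),
      (∀ i s, ∑ x, ‖y i s x‖ ^ 2 = 1) →
      (∀ i s, 0 < lam i s ∧ lam i s ≤ 1) →
      (∀ (i : Fin (k + 1)) (s s' : Fin (k + 1) → Fin Dm),
        (∀ j, j ≤ i → s j = s' j) → y i s = y i s') →
      (∀ (i : Fin (k + 1)) (s s' : Fin (k + 1) → Fin Dm),
        (∀ j, j ≤ i → s j = s' j) → lam i s = lam i s') →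
      (∀ (i : Fin (k + 1)) (s : Fin (k + 1) → Fin Dm),
        ∑ t : Fin Dm, (lam i (Function.update s i t) : ℂ) •
            Matrix.vecMulVec (y i (Function.update s i t)) (star (y i (Function.update s i t)))
          = (1 : Matrix (Fin (2 ^ ℓ)) (Fin (2 ^ ℓ)) ℂ)) →
      (∀ (i : Fin k) (s : Fin (k + 1) → Fin Dm),
        (sig i s).PosSemidef ∧ (sig i s).trace = 1) →
      (∀ (i : Fin k) (s s' : Fin (k + 1) → Fin Dm),
        (∀ j, j ≤ i.castSucc → s j = s' j) → sig i s = sig i s') →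
      ∀ (μ : Measure ↥(Matrix.unitaryGroup (Fin (2 ^ ℓ)) ℂ)),
        μ.IsHaarMeasure → IsProbabilityMeasure μ →
      ∑ s : Fin (k + 1) → Fin Dm,
        ‖((((‖y 0 s 0‖ ^ 2 * lam 0 s) * (((2 : ℝ) ^ ℓ) ^ k)⁻¹ *
              ∏ i : Fin k, lam i.succ s : ℝ)) : ℂ)
          - ((‖y 0 s 0‖ ^ 2 * lam 0 s : ℝ) : ℂ) *
              ∫ U : ↥(Matrix.unitaryGroup (Fin (2 ^ ℓ)) ℂ),
                ∏ i : Fin k,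
                  (star (y i.succ s) ⬝ᵥ ((U.1 * sig i s * (U.1)ᴴ) *ᵥ y i.succ s) *
                    (lam i.succ s : ℂ)) ∂μ‖
        ≤ C * (k : ℝ) ^ 3 / (2 : ℝ) ^ ℓ := by
  refine ⟨8, by norm_num, ?_⟩
  intro ℓ k Dm _ hk hDm _ y lam sig hy hlam hy' hlam' hpovm hsig hsig' μ _ _
  have : Nonempty (Fin Dm) := ⟨⟨0, hDm⟩⟩
  have hd : 0 < Fintype.card (Fin (2 ^ ℓ)) := by simp
  have hcard : (Fintype.card (Fin (2 ^ ℓ)) : ℝ) = 2 ^ ℓ := by simp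
  have hD : (0 : ℝ) < 2 ^ ℓ := by positivity
  have hk1 : (1 : ℝ) ≤ k := by exact_mod_cast hk
  have hy1 : ∀ i s, star (y i s) ⬝ᵥ y i s = 1 := fun i s => by
    rw [star_dotProduct_self_eq_ofReal, hy, Complex.ofReal_one]
  have hlam0 : ∀ i s, 0 ≤ lam i s := fun i s => (hlam i s).1.le
  let f₀ : (Fin (k + 1) → Fin Dm) → ℝ := fun s => ‖y 0 s 0‖ ^ 2 * lam 0 s
  have hf₀ : ∀ s, 0 ≤ f₀ s := fun s => mul_nonneg (sq_nonneg _) (hlam0 _ _)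
  have hf₀' : ∀ s s', s 0 = s' 0 → f₀ s = f₀ s' := fun s s' h => by
    have h' : ∀ j, j ≤ 0 → s j = s' j := fun j hj => by rwa [Fin.le_zero_iff.mp hj]
    simp only [f₀, hy' 0 s s' h', hlam' 0 s s' h']
  have hsum : ∀ s, ∑ t, f₀ (Function.update s 0 t) ≤ 1 := fun s => by
    have h := sum_weight_mul_norm_sq_of_povm (hpovm 0 s)
      (a := Pi.single (0 : Fin (2 ^ ℓ)) 1) (by simp)
    refine (Finset.sum_congr rfl fun t _ => ?_).trans_le h.le
    simp [f₀, mul_comm]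
  have hterm : ∀ s, ‖((((‖y 0 s 0‖ ^ 2 * lam 0 s) * (((2 : ℝ) ^ ℓ) ^ k)⁻¹ *
              ∏ i : Fin k, lam i.succ s : ℝ)) : ℂ)
          - ((‖y 0 s 0‖ ^ 2 * lam 0 s : ℝ) : ℂ) *
              ∫ U : ↥(Matrix.unitaryGroup (Fin (2 ^ ℓ)) ℂ),
                ∏ i : Fin k,
                  (star (y i.succ s) ⬝ᵥ ((U.1 * sig i s * (U.1)ᴴ) *ᵥ y i.succ s) *
                    (lam i.succ s : ℂ)) ∂μ‖ =
      f₀ s * ((∏ i : Fin k, lam i.succ s) * ‖((Fintype.card (Fin (2 ^ ℓ)) : ℂ) ^ k)⁻¹ -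
        ∫ U : unitaryGroup (Fin (2 ^ ℓ)) ℂ,
          ∏ i, star (y i.succ s) ⬝ᵥ ((U.1 * sig i s * U.1ᴴ) *ᵥ y i.succ s) ∂μ‖) := by
    intro s
    simp only [Finset.prod_mul_distrib, integral_mul_const]
    have h1 : ‖((f₀ s : ℝ) : ℂ)‖ = f₀ s := by
      rw [Complex.norm_real, Real.norm_of_nonneg (hf₀ s)]
    have h2 : ‖((∏ i : Fin k, lam i.succ s : ℝ) : ℂ)‖ = ∏ i : Fin k, lam i.succ s := by
      rw [Complex.norm_real, Real.norm_of_nonneg (Finset.prod_nonneg fun i _ => hlam0 _ _)]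
    conv_rhs => rw [← h1, ← h2, ← norm_mul, ← norm_mul]
    congr 1
    simp only [f₀]
    push_cast [Fintype.card_fin]
    ring
  rw [Finset.sum_congr rfl fun s _ => hterm s]
  rcases le_or_gt (4 * (k : ℝ) ^ 2) (2 ^ ℓ) with h | h
  · refine (sum_mul_prod_weight_mul_norm_sub_le (hcard ▸ h) hd hf₀ hf₀' hsum hy1 hlam0 hy' hlam'
      hpovm hsig).trans ?_
    rw [hcard]
    gcongr
    norm_num
  · refine (sum_mul_prod_weight_mul_norm_sub_le_two hd hf₀ hf₀' hsum hy1 hlam0 hy' hlam'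
      hpovm hsig hsig').trans ?_
    rw [le_div_iff₀ hD]
    nlinarith [sq_nonneg (k : ℝ)]
end

section
/- If in addition k² < D, then for every fixed s_0 ∈ {1,...,D_m}: (1/D^k) · ∑_{τ ≠ id} ∑_{(s_1,...,s_k) ∈ {1,...,D_m}^k} ∏_{i=1}^k |⟨y^{τ(i)}_{s_0 s_1 ... s_{τ(i)}} | y^i_{s_0 s_1 ... s_i}⟩| · λ^i_{s_0 s_1 ... s_i} ≤ (1+k)·(k²/D) / (1 − k²/D), where the outer sum ranges over all non-identity permutations τ of {1,...,k}. -/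
open Matrix

/-- If `f i s` depends only on the coordinates of `s` up to `i`, and summing `f i` over the `i`-th
coordinate gives at most `C i`, then the iterated sum of `∏ i, f i` is at most `∏ i, C i`. -/
lemma sum_prod_le_prod_of_sum_update_le {α : Type*} [Fintype α] [Nonempty α] {n : ℕ}
    (f : Fin n → (Fin n → α) → ℝ) (C : Fin n → ℝ) (hf : ∀ i s, 0 ≤ f i s)
    (hdep : ∀ i s s', (∀ j, j ≤ i → s j = s' j) → f i s = f i s')
    (hC : ∀ i s, ∑ t, f i (Function.update s i t) ≤ C i) :
    ∑ s, ∏ i, f i s ≤ ∏ i, C i := by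
  induction n with
  | zero => simp
  | succ n ih =>
    obtain ⟨a⟩ := ‹Nonempty α›
    have hC_nonneg : ∀ i, 0 ≤ C i := fun i =>
      (Finset.sum_nonneg fun t _ => hf i _).trans (hC i fun _ => a)
    rw [← (Fin.consEquiv fun _ => α).sum_comp, Fintype.sum_prod_type]
    have hhead : ∀ (t : α) (s : Fin n → α),
        f 0 (Fin.cons t s) = f 0 (Function.update (fun _ => a) 0 t) := by
      intro t s
      apply hdep
      intro j hj
      obtain rfl : j = 0 := by simpa using hj
      simp
    have htail : ∀ t : α, ∑ s : Fin n → α, ∏ i : Fin n, f i.succ (Fin.cons t s) ≤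
        ∏ i : Fin n, C i.succ := by
      intro t
      refine ih (fun i s => f i.succ (Fin.cons t s)) (fun i => C i.succ)
        (fun i s => hf _ _) ?_ ?_
      · intro i s s' h
        apply hdep
        intro j hj
        induction j using Fin.cases with
        | zero => simp
        | succ j => simpa using h j (by simpa using hj)
      · intro i s
        simpa only [Fin.cons_update] using hC i.succ (Fin.cons t s)
    calc ∑ t : α, ∑ s : Fin n → α, ∏ i, f i (Fin.consEquiv (fun _ => α) (t, s))
        = ∑ t : α, f 0 (Function.update (fun _ => a) 0 t) *
            ∑ s : Fin n → α, ∏ i : Fin n, f i.succ (Fin.cons t s) := by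
          refine Finset.sum_congr rfl fun t _ => ?_
          rw [Finset.mul_sum]
          refine Finset.sum_congr rfl fun s _ => ?_
          rw [Fin.prod_univ_succ, ← hhead t s]
          rfl
      _ ≤ ∑ t : α, f 0 (Function.update (fun _ => a) 0 t) * ∏ i : Fin n, C i.succ :=
          Finset.sum_le_sum fun t _ => mul_le_mul_of_nonneg_left (htail t) (hf _ _)
      _ ≤ C 0 * ∏ i : Fin n, C i.succ := by
          rw [← Finset.sum_mul]
          exact mul_le_mul_of_nonneg_right (hC 0 _) (Finset.prod_nonneg fun i _ => hC_nonneg _)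
      _ = ∏ i, C i := (Fin.prod_univ_succ C).symm

/-- Charging the factor at `i` of a product along a permutation `τ` to the larger of `i`
and `τ i`. -/
lemma prod_eq_prod_ite_mul_ite_perm {ι M : Type*} [Fintype ι] [LinearOrder ι] [CommMonoid M]
    (τ : Equiv.Perm ι) (E : ι → M) :
    ∏ i, E i = ∏ i, ((if τ i ≤ i then E i else 1) *
      (if τ⁻¹ i < i then E (τ⁻¹ i) else 1)) := by
  rw [Finset.prod_mul_distrib,
    ← Equiv.prod_comp τ (fun i => if τ⁻¹ i < i then E (τ⁻¹ i) else 1), ← Finset.prod_mul_distrib]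
  refine Finset.prod_congr rfl fun i _ => ?_
  rcases le_or_gt (τ i) i with h | h
  · simp [h, not_lt.mpr h]
  · simp [h, not_le.mpr h]

/-- Parseval's identity for a weighted family of vectors resolving the identity. -/
lemma sum_mul_norm_sq_of_resolution {ι n : Type*} [Fintype ι] [Fintype n] [DecidableEq n]
    (w : ι → ℝ) (v : ι → n → ℂ)
    (h : ∑ t, (w t : ℂ) • vecMulVec (v t) (star (v t)) = (1 : Matrix n n ℂ)) (u : n → ℂ) :
    ∑ t, w t * ‖∑ x, (starRingEnd ℂ) (u x) * v t x‖ ^ 2 = ∑ x, ‖u x‖ ^ 2 := by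
  have key := congrArg (fun A : Matrix n n ℂ => star u ⬝ᵥ A *ᵥ u) h
  simp only [sum_mulVec, dotProduct_sum, smul_mulVec, dotProduct_smul, one_mulVec,
    vecMulVec_mulVec] at key
  apply Complex.ofReal_injective
  push_cast
  calc ∑ t, (w t : ℂ) * (‖∑ x, (starRingEnd ℂ) (u x) * v t x‖ : ℂ) ^ 2
      = star u ⬝ᵥ u := by
        rw [← key]
        refine Finset.sum_congr rfl fun t _ => ?_
        rw [smul_eq_mul, ← Complex.mul_conj']
        congr 1
        simp [dotProduct, Finset.mul_sum, mul_comm, mul_left_comm]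
    _ = ∑ x, (‖u x‖ : ℂ) ^ 2 := by
        simp [dotProduct, Complex.conj_mul']

/-- The total weight of unit vectors resolving the identity is the dimension. -/
lemma sum_weight_of_resolution {ι n : Type*} [Fintype ι] [Fintype n] [DecidableEq n]
    (w : ι → ℝ) (v : ι → n → ℂ) (hv : ∀ t, ∑ x, ‖v t x‖ ^ 2 = 1)
    (h : ∑ t, (w t : ℂ) • vecMulVec (v t) (star (v t)) = (1 : Matrix n n ℂ)) :
    ∑ t, w t = Fintype.card n := by
  have key := congrArg Matrix.trace h
  simp only [trace_sum, trace_smul, trace_vecMulVec, trace_one] at key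
  apply Complex.ofReal_injective
  push_cast
  rw [← key]
  refine Finset.sum_congr rfl fun t _ => ?_
  have : v t ⬝ᵥ star (v t) = ((∑ x, ‖v t x‖ ^ 2 : ℝ) : ℂ) := by
    simp [dotProduct, Complex.mul_conj']
  rw [this, hv]
  simp

/-- Weighted Cauchy–Schwarz inequality. -/
lemma sum_weight_mul_mul_le {ι : Type*} [Fintype ι] (w a b : ι → ℝ) (hw : ∀ t, 0 ≤ w t)
    {D p q : ℝ} (hD : 0 ≤ D) (hp : 0 ≤ p) (hq : 0 ≤ q)
    (ha : ∑ t, w t * a t ^ 2 = D * p ^ 2) (hb : ∑ t, w t * b t ^ 2 = D * q ^ 2) :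
    ∑ t, w t * (a t * b t) ≤ D * (p * q) := by
  apply le_of_sq_le_sq _ (by positivity)
  calc (∑ t, w t * (a t * b t)) ^ 2
      ≤ (∑ t, w t * a t ^ 2) * ∑ t, w t * b t ^ 2 := by
        apply Finset.sum_sq_le_sum_mul_sum_of_sq_le_mul
        · exact fun t _ => mul_nonneg (hw t) (sq_nonneg _)
        · exact fun t _ => mul_nonneg (hw t) (sq_nonneg _)
        · intro t _
          exact le_of_eq (by ring)
    _ = (D * (p * q)) ^ 2 := by rw [ha, hb]; ring

/-- At most `#A !` permutations have support exactly `A`. -/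
lemma card_filter_support_eq_le_s5 {α : Type*} [Fintype α] [DecidableEq α] (A : Finset α) :
    (Finset.univ.filter fun τ : Equiv.Perm α => τ.support = A).card ≤ A.card.factorial := by
  rw [← Fintype.card_coe A, ← Fintype.card_perm, ← Finset.card_univ]
  refine (Finset.card_le_card ?_).trans
    (Finset.card_image_le (f := fun σ : Equiv.Perm A => Equiv.Perm.ofSubtype σ))
  intro τ hτ
  have hA : τ.support = A := by simpa using hτ
  have hmem : ∀ x, τ x ∈ A ↔ x ∈ A := fun x => by
    rw [← hA, Equiv.Perm.apply_mem_support]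
  refine Finset.mem_image.mpr ⟨τ.subtypePerm hmem, Finset.mem_univ _, ?_⟩
  apply Equiv.Perm.ofSubtype_subtypePerm
  intro x hx
  rw [← hA]
  exact Equiv.Perm.mem_support.mpr hx

/-- At most `n ^ m` permutations of an `n`-element type move exactly `m` points. -/
lemma card_filter_card_support_eq_le {α : Type*} [Fintype α] [DecidableEq α] (m : ℕ) :
    (Finset.univ.filter fun τ : Equiv.Perm α => τ.support.card = m).card ≤
      Fintype.card α ^ m := by
  calc (Finset.univ.filter fun τ : Equiv.Perm α => τ.support.card = m).card
      ≤ m.factorial * (Finset.powersetCard m (Finset.univ : Finset α)).card := by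
        refine Finset.card_le_mul_card_image_of_maps_to (f := Equiv.Perm.support) ?_ _ ?_
        · intro τ hτ
          simpa [Finset.mem_powersetCard] using hτ
        · intro A hA
          rw [← (Finset.mem_powersetCard.mp hA).2]
          refine (Finset.card_le_card ?_).trans (card_filter_support_eq_le_s5 A)
          intro τ hτ
          simpa using (Finset.mem_filter.mp hτ).2
    _ = (Fintype.card α).descFactorial m := by
        rw [Finset.card_powersetCard, Finset.card_univ, Nat.descFactorial_eq_factorial_mul_choose]
    _ ≤ Fintype.card α ^ m := Nat.descFactorial_le_pow _ _

/-- The non-identity permutations, weighted by `r` to the number of moved points, sum to at most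
a geometric series starting at its quadratic term. -/
lemma sum_pow_card_support_le_s5 {α : Type*} [Fintype α] [DecidableEq α] {r : ℝ} (hr : 0 ≤ r)
    (hr_lt : Fintype.card α * r < 1) :
    ∑ τ ∈ Finset.univ.filter (fun τ : Equiv.Perm α => τ ≠ 1), r ^ τ.support.card ≤
      (Fintype.card α * r) ^ 2 / (1 - Fintype.card α * r) := by
  set N := Fintype.card α with hN
  have hmaps : ∀ τ ∈ Finset.univ.filter (fun τ : Equiv.Perm α => τ ≠ 1),
      τ.support.card ∈ Finset.Ico 2 (N + 1) := by
    intro τ hτ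
    rw [Finset.mem_Ico]
    exact ⟨Equiv.Perm.two_le_card_support_of_ne_one (Finset.mem_filter.mp hτ).2,
      Nat.lt_succ_of_le (Finset.card_le_univ _)⟩
  rw [← Finset.sum_fiberwise_of_maps_to hmaps]
  refine le_trans (Finset.sum_le_sum fun m _ => ?_)
    (geom_sum_Ico_le_of_lt_one (m := 2) (n := N + 1) (by positivity) hr_lt)
  calc ∑ τ ∈ (Finset.univ.filter fun τ : Equiv.Perm α => τ ≠ 1).filter
          (fun τ => τ.support.card = m), r ^ τ.support.card
      = ∑ τ ∈ (Finset.univ.filter fun τ : Equiv.Perm α => τ ≠ 1).filter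
          (fun τ => τ.support.card = m), r ^ m :=
        Finset.sum_congr rfl fun τ hτ => by rw [(Finset.mem_filter.mp hτ).2]
    _ ≤ (N : ℝ) ^ m * r ^ m := by
        rw [Finset.sum_const, nsmul_eq_mul]
        refine mul_le_mul_of_nonneg_right ?_ (by positivity)
        refine le_trans ?_ (Nat.cast_le.mpr (card_filter_card_support_eq_le (α := α) m)) |>.trans
          (by push_cast; rfl)
        refine Nat.cast_le.mpr (Finset.card_le_card ?_)
        exact Finset.filter_subset_filter _ (Finset.filter_subset _ _)
    _ = (N * r) ^ m := (mul_pow _ _ _).symm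

/-- For adaptively chosen unit vectors `y i s` (depending on `s j` for `j ≤ i`) resolving the
identity of an `n`-dimensional space with weights `lam i s`, the sum over all outcomes of the
products of overlaps along a permutation loses a factor `√n` for every moved point. -/
lemma sum_prod_overlap_perm_le {n α : Type*} [Fintype n] [DecidableEq n]
    [Fintype α] [Nonempty α] {k : ℕ}
    (y : Fin k → (Fin k → α) → n → ℂ) (lam : Fin k → (Fin k → α) → ℝ)
    (hy_unit : ∀ i s, ∑ x, ‖y i s x‖ ^ 2 = 1) (hlam : ∀ i s, 0 ≤ lam i s)
    (hy_dep : ∀ i s s', (∀ j, j ≤ i → s j = s' j) → y i s = y i s')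
    (hlam_dep : ∀ i s s', (∀ j, j ≤ i → s j = s' j) → lam i s = lam i s')
    (hcomplete : ∀ i s, ∑ t, (lam i (Function.update s i t) : ℂ) •
      vecMulVec (y i (Function.update s i t)) (star (y i (Function.update s i t)))
        = (1 : Matrix n n ℂ)) {r : ℝ} (hr : 0 ≤ r) (hr_sq : Fintype.card n * r ^ 2 = 1)
    (τ : Equiv.Perm (Fin k)) :
    ∑ s, ∏ i, (‖∑ x, (starRingEnd ℂ) (y (τ i) s x) * y i s x‖ * lam i s) ≤
      (Fintype.card n : ℝ) ^ k * r ^ τ.support.card := by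
  set D : ℝ := (Fintype.card n : ℝ)
  have hD : 0 ≤ D := Nat.cast_nonneg _
  set E : Fin k → (Fin k → α) → ℝ := fun i s => ‖∑ x, (starRingEnd ℂ) (y (τ i) s x) * y i s x‖
  have hE_swap : ∀ i s, E i s = ‖∑ x, (starRingEnd ℂ) (y i s x) * y (τ i) s x‖ := by
    intro i s
    simp only [E]
    rw [← RCLike.norm_conj]
    simp [map_sum, mul_comm]
  set R : Fin k → ℝ := fun i => if τ i = i then 1 else r
  have hR : ∀ i, 0 ≤ R i := fun i => by simp only [R]; split_ifs <;> positivity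
  have hprodR : ∏ i, R i = r ^ τ.support.card := by
    simp only [R, Finset.prod_ite, Finset.prod_const_one, one_mul, Finset.prod_const]
    rfl
  have hupd : ∀ i j (s : Fin k → α) t, j < i → y j (Function.update s i t) = y j s := by
    intro i j s t hj
    refine hy_dep _ _ _ fun l hl => ?_
    rw [Function.update_of_ne (lt_of_le_of_lt hl hj).ne]
  have hweight : ∀ i s, ∑ t, lam i (Function.update s i t) = D := fun i s =>
    sum_weight_of_resolution _ _ (fun t => hy_unit i _) (hcomplete i s)
  have hoverlap : ∀ i j s, j < i → ∑ t, lam i (Function.update s i t) *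
      ‖∑ x, (starRingEnd ℂ) (y j (Function.update s i t) x) *
        y i (Function.update s i t) x‖ ^ 2 = D * r ^ 2 := by
    intro i j s hj
    simp only [hupd i j s _ hj]
    rw [sum_mul_norm_sq_of_resolution _ _ (hcomplete i s), hy_unit, hr_sq]
  have hE_dep : ∀ i l s s', i ≤ l → τ i ≤ l → (∀ j, j ≤ l → s j = s' j) → E i s = E i s' := by
    intro i l s s' hi hτi h
    simp only [E]
    rw [hy_dep i s s' fun j hj => h j (hj.trans hi),
      hy_dep (τ i) s s' fun j hj => h j (hj.trans hτi)]
  calc ∑ s, ∏ i, (E i s * lam i s)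
      = ∑ s, ∏ i, (lam i s * ((if τ i ≤ i then E i s else 1) *
          (if τ⁻¹ i < i then E (τ⁻¹ i) s else 1))) := by
        refine Finset.sum_congr rfl fun s _ => ?_
        rw [Finset.prod_mul_distrib, Finset.prod_mul_distrib,
          ← prod_eq_prod_ite_mul_ite_perm τ (fun i => E i s), mul_comm]
    _ ≤ ∏ i, (D * ((if τ i ≤ i then R i else 1) * (if τ⁻¹ i < i then R (τ⁻¹ i) else 1))) := by
        apply sum_prod_le_prod_of_sum_update_le
        · intro i s
          refine mul_nonneg (hlam i s) (mul_nonneg ?_ ?_) <;> split_ifs <;>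
            first | exact norm_nonneg _ | exact zero_le_one
        · intro i s s' h
          rw [hlam_dep i s s' h]
          congr 2
          · split_ifs with hi
            · exact hE_dep i i s s' le_rfl hi h
            · rfl
          · split_ifs with hi
            · exact hE_dep _ i s s' hi.le (by simp) h
            · rfl
        · intro i s
          refine sum_weight_mul_mul_le _ _ _ (fun t => hlam _ _) hD ?_ ?_ ?_ ?_
          · split_ifs
            exacts [hR _, zero_le_one]
          · split_ifs
            exacts [hR _, zero_le_one]
          · rcases lt_trichotomy (τ i) i with h | h | h
            · simpa [R, E, h.le, h.ne] using hoverlap i (τ i) s h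
            · have hE_one : ∀ s, E i s = 1 := by
                intro s
                have : ∑ x, (starRingEnd ℂ) (y i s x) * y i s x =
                    ((∑ x, ‖y i s x‖ ^ 2 : ℝ) : ℂ) := by
                  simp [Complex.conj_mul']
                simp only [E, h]
                rw [this, hy_unit]
                simp
              simp [R, h, hE_one, hweight]
            · simp [not_le.mpr h, hweight]
          · rcases lt_or_ge (τ⁻¹ i) i with h | h
            · have happ : τ (τ⁻¹ i) = i := τ.apply_symm_apply i
              simp only [hE_swap, if_pos h, R, happ, if_neg h.ne']
              exact hoverlap i (τ⁻¹ i) s h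
            · simp only [if_neg (not_lt.mpr h)]
              simp [hweight]
    _ = D ^ k * r ^ τ.support.card := by
        rw [Finset.prod_mul_distrib, ← prod_eq_prod_ite_mul_ite_perm τ R, hprodR]
        simp

/-- For the adaptive measurement data `y, λ` (unit vectors and weights
satisfying the POVM completeness condition), if moreover `k² < D = 2^ℓ`, then for every
fixed `s₀`, summing the quantity of Statement 4 over all non-identity permutations `τ`:
`D^{−k} ∑_{τ ≠ id} ∑_{s₁,…,s_k} ∏_{i=1}^k |⟨y^{τ(i)}_{s₀…s_{τ(i)}} | y^i_{s₀…s_i}⟩| ·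
λ^i_{s₀…s_i} ≤ (1+k)(k²/D)/(1 − k²/D)`. -/
theorem sum_over_permutations_bound
    (ℓ k Dm : ℕ) (hℓ : 1 ≤ ℓ) (hk : 1 ≤ k) (hDm : 1 ≤ Dm)
    (y : Fin (k + 1) → (Fin (k + 1) → Fin Dm) → (Fin (2 ^ ℓ) → ℂ))
    (lam : Fin (k + 1) → (Fin (k + 1) → Fin Dm) → ℝ)
    (hy_unit : ∀ i s, ∑ x, ‖y i s x‖ ^ 2 = 1)
    (hlam : ∀ i s, 0 < lam i s ∧ lam i s ≤ 1)
    (hy_prefix : ∀ (i : Fin (k + 1)) (s s' : Fin (k + 1) → Fin Dm),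
      (∀ j, j ≤ i → s j = s' j) → y i s = y i s')
    (hlam_prefix : ∀ (i : Fin (k + 1)) (s s' : Fin (k + 1) → Fin Dm),
      (∀ j, j ≤ i → s j = s' j) → lam i s = lam i s')
    (hcomplete : ∀ (i : Fin (k + 1)) (s : Fin (k + 1) → Fin Dm),
      ∑ t : Fin Dm, (lam i (Function.update s i t) : ℂ) •
          Matrix.vecMulVec (y i (Function.update s i t)) (star (y i (Function.update s i t)))
        = (1 : Matrix (Fin (2 ^ ℓ)) (Fin (2 ^ ℓ)) ℂ))
    (hkD : k ^ 2 < 2 ^ ℓ) :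
    ∀ s₀ : Fin Dm,
      (((2 : ℝ) ^ ℓ) ^ k)⁻¹ *
        ∑ τ ∈ Finset.univ.filter (fun τ : Equiv.Perm (Fin k) => τ ≠ 1),
          ∑ s' : Fin k → Fin Dm,
            ∏ i : Fin k,
              (‖∑ x, (starRingEnd ℂ) (y (τ i).succ (Fin.cons s₀ s') x) *
                  y i.succ (Fin.cons s₀ s') x‖ * lam i.succ (Fin.cons s₀ s'))
        ≤ ((1 : ℝ) + k) * ((k : ℝ) ^ 2 / (2 : ℝ) ^ ℓ) /
            (1 - (k : ℝ) ^ 2 / (2 : ℝ) ^ ℓ) := by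
  intro s₀
  have : NeZero Dm := ⟨by omega⟩
  set D : ℝ := (2 : ℝ) ^ ℓ with hD_def
  have hD : 0 < D := by positivity
  have hk_lt : (k : ℝ) ^ 2 < D := by rw [hD_def]; exact_mod_cast hkD
  have hk_one : (1 : ℝ) ≤ k := by exact_mod_cast hk
  have hD_one : 1 ≤ D := by nlinarith
  set r : ℝ := (√D)⁻¹
  have hr : 0 ≤ r := by positivity
  have hr_one : r ≤ 1 := inv_le_one_of_one_le₀ (Real.one_le_sqrt.mpr hD_one)
  have hr_sq : r ^ 2 = D⁻¹ := by rw [inv_pow, Real.sq_sqrt hD.le]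
  have hcard : (Fintype.card (Fin (2 ^ ℓ)) : ℝ) = D := by simp [hD_def]
  have hx_sq : (k * r) ^ 2 = (k : ℝ) ^ 2 / D := by rw [mul_pow, hr_sq, div_eq_mul_inv]
  have hx_sq_lt : (k * r) ^ 2 < 1 := by rw [hx_sq, div_lt_one hD]; exact hk_lt
  have hx : 0 ≤ k * r := by positivity
  have hx_lt : k * r < 1 := by nlinarith
  have hterm : ∀ τ : Equiv.Perm (Fin k), ∑ s' : Fin k → Fin Dm, ∏ i : Fin k,
      (‖∑ x, (starRingEnd ℂ) (y (τ i).succ (Fin.cons s₀ s') x) *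
        y i.succ (Fin.cons s₀ s') x‖ * lam i.succ (Fin.cons s₀ s')) ≤
      D ^ k * r ^ τ.support.card := by
    intro τ
    have hcons : ∀ (i : Fin k) (s s' : Fin k → Fin Dm), (∀ j, j ≤ i → s j = s' j) →
        ∀ j, j ≤ i.succ →
          (Fin.cons s₀ s : Fin (k + 1) → Fin Dm) j = (Fin.cons s₀ s' : Fin (k + 1) → Fin Dm) j := by
      intro i s s' h j hj
      induction j using Fin.cases with
      | zero => simp
      | succ j => simpa using h j (by simpa using hj)
    rw [← hcard]
    refine sum_prod_overlap_perm_le (fun i s => y i.succ (Fin.cons s₀ s))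
      (fun i s => lam i.succ (Fin.cons s₀ s)) (fun i s => hy_unit _ _) (fun i s => (hlam _ _).1.le)
      (fun i s s' h => hy_prefix _ _ _ (hcons i s s' h))
      (fun i s s' h => hlam_prefix _ _ _ (hcons i s s' h)) ?_ hr ?_ τ
    · intro i s
      simpa only [Fin.cons_update] using hcomplete i.succ (Fin.cons s₀ s)
    · rw [hcard, hr_sq, mul_inv_cancel₀ hD.ne']
  have hgeom := sum_pow_card_support_le_s5 (α := Fin k) hr (by simpa using hx_lt)
  rw [Fintype.card_fin] at hgeom
  calc _ ≤ (D ^ k)⁻¹ * ∑ τ ∈ Finset.univ.filter (fun τ : Equiv.Perm (Fin k) => τ ≠ 1),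
          D ^ k * r ^ τ.support.card :=
        mul_le_mul_of_nonneg_left (Finset.sum_le_sum fun τ _ => hterm τ) (by positivity)
    _ = ∑ τ ∈ Finset.univ.filter (fun τ : Equiv.Perm (Fin k) => τ ≠ 1), r ^ τ.support.card := by
        rw [← Finset.mul_sum, inv_mul_cancel_left₀ (pow_ne_zero _ hD.ne')]
    _ ≤ (k * r) ^ 2 / (1 - k * r) := hgeom
    _ = (1 + k * r) * (k * r) ^ 2 / (1 - (k * r) ^ 2) := by
        have h₁ : 1 - k * r ≠ 0 := by linarith
        have h₂ : 1 - (k * r) ^ 2 ≠ 0 := by linarith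
        rw [div_eq_div_iff h₁ h₂]
        ring
    _ ≤ (1 + k) * (k * r) ^ 2 / (1 - (k * r) ^ 2) := by
        have h₂ : 0 ≤ 1 - (k * r) ^ 2 := by linarith
        gcongr
        exact mul_le_of_le_one_right (by positivity) hr_one
    _ = _ := by rw [hx_sq]
end

section
/- For every integer D ≥ 1, the Haar integral over the unitary group satisfies ∫_{U(D)} |tr(U · Uᵀ)|² dU = 2D/(D+1), where Uᵀ denotes the transpose of U (not the conjugate transpose) and tr is the matrix trace. -/
open MeasureTheory Matrix

theorem inv_sqrt_two_mul_self : ((√2 : ℝ) : ℂ)⁻¹ * ((√2 : ℝ) : ℂ)⁻¹ = 1 / 2 := by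
  rw [← mul_inv, ← Complex.ofReal_mul, Real.mul_self_sqrt (by norm_num)]
  norm_num

section HadamardRotation

variable {n : Type*} [DecidableEq n]

/-- The Hadamard rotation acting on the coordinates `i` and `k`. -/
noncomputable def hadamardRotation (i k : n) : Matrix n n ℂ :=
  of fun a => if a = i then ((√2 : ℝ) : ℂ)⁻¹ • (Pi.single i 1 + Pi.single k 1)
    else if a = k then ((√2 : ℝ) : ℂ)⁻¹ • (Pi.single i 1 - Pi.single k 1)
    else Pi.single a 1

theorem hadamardRotation_left (i k : n) : hadamardRotation i k i =
    ((√2 : ℝ) : ℂ)⁻¹ • (Pi.single i 1 + Pi.single k 1) :=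
  if_pos rfl

theorem hadamardRotation_right {i k : n} (hik : i ≠ k) : hadamardRotation i k k =
    ((√2 : ℝ) : ℂ)⁻¹ • (Pi.single i 1 - Pi.single k 1) :=
  (if_neg hik.symm).trans (if_pos rfl)

theorem hadamardRotation_of_ne {i k a : n} (hai : a ≠ i) (hak : a ≠ k) :
    hadamardRotation i k a = Pi.single a 1 :=
  (if_neg hai).trans (if_neg hak)

end HadamardRotation

section TransposeGram

variable {n : Type*} [Fintype n] [DecidableEq n]

theorem measurable_unitaryGroup_entry (i k : n) :
    Measurable fun U : unitaryGroup n ℂ => U.1 i k :=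
  (measurable_pi_apply k).comp ((measurable_pi_apply i).comp measurable_subtype_coe)

instance : MeasurableMul (unitaryGroup n ℂ) where
  measurable_const_mul g := by
    refine Measurable.subtype_mk (measurable_pi_lambda _ fun i => measurable_pi_lambda _ fun k => ?_)
    change Measurable fun U : unitaryGroup n ℂ => (g.1 * U.1) i k
    simp only [mul_apply]
    exact Finset.measurable_sum _ fun j _ => (measurable_unitaryGroup_entry j k).const_mul _
  measurable_mul_const g := by
    refine Measurable.subtype_mk (measurable_pi_lambda _ fun i => measurable_pi_lambda _ fun k => ?_)
    change Measurable fun U : unitaryGroup n ℂ => (U.1 * g.1) i k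
    simp only [mul_apply]
    exact Finset.measurable_sum _ fun j _ => (measurable_unitaryGroup_entry i j).mul_const _

theorem measurable_mul_transpose_entry (i k : n) :
    Measurable fun U : unitaryGroup n ℂ => (U.1 * U.1ᵀ) i k := by
  simp only [mul_apply, transpose_apply]
  exact Finset.measurable_sum _ fun j _ =>
    (measurable_unitaryGroup_entry i j).mul (measurable_unitaryGroup_entry k j)

theorem mul_transpose_mem_unitaryGroup (U : unitaryGroup n ℂ) :
    U.1 * U.1ᵀ ∈ unitaryGroup n ℂ :=
  mul_mem U.2 (transpose_mem_unitaryGroup_iff.mpr U.2)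

theorem norm_mul_transpose_entry_le_one (U : unitaryGroup n ℂ) (i k : n) :
    ‖(U.1 * U.1ᵀ) i k‖ ≤ 1 :=
  entry_norm_bound_of_unitary (mul_transpose_mem_unitaryGroup U) i k

theorem sum_norm_sq_entry_of_mem_unitaryGroup {V : Matrix n n ℂ} (hV : V ∈ unitaryGroup n ℂ) :
    ∑ i, ∑ k, ‖V i k‖ ^ 2 = Fintype.card n := by
  have hrow (i : n) : ∑ k, ‖V i k‖ ^ 2 = 1 := by
    have h := congrFun (congrFun (mem_unitaryGroup_iff.mp hV) i) i
    simp only [mul_apply, star_apply, one_apply_eq, RCLike.star_def, Complex.mul_conj'] at h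
    exact_mod_cast h
  simp [hrow]

variable (μ : Measure (unitaryGroup n ℂ))

theorem integrable_norm_sq_mul_transpose_entry [IsFiniteMeasure μ] (i k : n) :
    Integrable (fun U => ‖(U.1 * U.1ᵀ) i k‖ ^ 2) μ := by
  refine Integrable.of_bound
    ((measurable_mul_transpose_entry i k).norm.pow_const 2).aestronglyMeasurable 1
    (ae_of_all _ fun U => ?_)
  rw [Real.norm_of_nonneg (by positivity)]
  exact pow_le_one₀ (norm_nonneg _) (norm_mul_transpose_entry_le_one U i k)

theorem integrable_re_mul_conj_mul_transpose_diag [IsFiniteMeasure μ] (i k : n) :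
    Integrable (fun U => ((U.1 * U.1ᵀ) i i * star ((U.1 * U.1ᵀ) k k)).re) μ := by
  refine Integrable.of_bound (Complex.measurable_re.comp
    ((measurable_mul_transpose_entry i i).mul
      (Complex.continuous_conj.measurable.comp
        (measurable_mul_transpose_entry k k)))).aestronglyMeasurable 1
    (ae_of_all _ fun U => ?_)
  refine (Complex.abs_re_le_norm _).trans ?_
  rw [norm_mul, norm_star]
  exact mul_le_one₀ (norm_mul_transpose_entry_le_one U i i) (norm_nonneg _)
    (norm_mul_transpose_entry_le_one U k k)

theorem integral_comp_mul_transpose_congruence [μ.IsMulLeftInvariant]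
    (F : Matrix n n ℂ → ℝ) {g : Matrix n n ℂ} (hg : g ∈ unitaryGroup n ℂ) :
    ∫ U, F (g * (U.1 * U.1ᵀ) * gᵀ) ∂μ = ∫ U, F (U.1 * U.1ᵀ) ∂μ := by
  rw [← integral_mul_left_eq_self (fun U : unitaryGroup n ℂ => F (U.1 * U.1ᵀ)) ⟨g, hg⟩]
  simp only [Submonoid.coe_mul, transpose_mul, Matrix.mul_assoc]

/-- Changing the phase of one row kills the mixed moments of the diagonal entries of `U Uᵀ`. -/
theorem integral_re_mul_conj_mul_transpose_diag [μ.IsMulLeftInvariant] {i k : n} (hik : i ≠ k) :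
    ∫ U, ((U.1 * U.1ᵀ) i i * star ((U.1 * U.1ᵀ) k k)).re ∂μ = 0 := by
  let d : n → ℂ := Function.update 1 i Complex.I
  have hd : diagonal d ∈ unitaryGroup n ℂ := by
    rw [mem_unitaryGroup_iff, star_eq_conjTranspose, diagonal_conjTranspose, diagonal_mul_diagonal,
      diagonal_eq_one]
    funext a
    by_cases ha : a = i <;> simp [d, ha]
  have h := integral_comp_mul_transpose_congruence μ (fun W => (W i i * star (W k k)).re) hd
  have hneg (W : Matrix n n ℂ) :
      ((diagonal d * W * (diagonal d)ᵀ) i i *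
        star ((diagonal d * W * (diagonal d)ᵀ) k k)).re = -(W i i * star (W k k)).re := by
    have hi : Complex.I * W i i * Complex.I = -W i i := by
      linear_combination W i i * Complex.I_mul_I
    simp only [diagonal_transpose, mul_diagonal, diagonal_mul, d, Function.update_self,
      Function.update_of_ne hik.symm, Pi.one_apply, one_mul, mul_one, hi, neg_mul, Complex.neg_re]
  simp only [hneg, integral_neg] at h
  linarith

theorem hadamardRotation_mem_unitaryGroup {i k : n} (hik : i ≠ k) :
    hadamardRotation i k ∈ unitaryGroup n ℂ := by
  have hs := inv_sqrt_two_mul_self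
  rw [mem_unitaryGroup_iff]
  ext a b
  have hdot : (hadamardRotation i k * star (hadamardRotation i k)) a b =
      hadamardRotation i k a ⬝ᵥ star (hadamardRotation i k b) := rfl
  rw [hdot]
  have hstar (c : n) : star (Pi.single c 1 : n → ℂ) = Pi.single c 1 := by
    rw [← Pi.single_star, star_one]
  rcases eq_or_ne a i with rfl | hai
  · rcases eq_or_ne b a with rfl | hba
    · simp [hadamardRotation_left, hstar, hik, hik.symm]
      linear_combination 2 * hs
    rcases eq_or_ne b k with rfl | hbk
    · simp [hadamardRotation_left, hadamardRotation_right hik, hstar, hik, hik.symm]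
    · simp [hadamardRotation_left, hadamardRotation_of_ne hba hbk, hstar, hba, hbk, hba.symm]
  rcases eq_or_ne a k with rfl | hak
  · rcases eq_or_ne b i with rfl | hbi
    · simp [hadamardRotation_left, hadamardRotation_right hik, hstar, hik, hik.symm]
    rcases eq_or_ne b a with rfl | hba
    · simp [hadamardRotation_right hik, hstar, hik, hik.symm]
      linear_combination 2 * hs
    · simp [hadamardRotation_right hik, hadamardRotation_of_ne hbi hba, hstar, hbi, hba, hba.symm]
  rcases eq_or_ne b i with rfl | hbi
  · simp [hadamardRotation_left, hadamardRotation_of_ne hai hak, hstar, hai, hak]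
  rcases eq_or_ne b k with rfl | hbk
  · simp [hadamardRotation_right hik, hadamardRotation_of_ne hai hak, hstar, hai, hak]
  · simp [hadamardRotation_of_ne hai hak, hadamardRotation_of_ne hbi hbk, hstar, Pi.single_apply,
      one_apply, eq_comm]

theorem hadamardRotation_congruence_apply {i k : n} (hik : i ≠ k) {W : Matrix n n ℂ}
    (hW : W.IsSymm) :
    (hadamardRotation i k * W * (hadamardRotation i k)ᵀ) i k = (W i i - W k k) / 2 := by
  have hs := inv_sqrt_two_mul_self
  have hdot : (hadamardRotation i k * W * (hadamardRotation i k)ᵀ) i k =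
      (hadamardRotation i k i ᵥ* W) ⬝ᵥ hadamardRotation i k k := rfl
  rw [hdot]
  have := hW.apply i k
  simp [hadamardRotation_left, hadamardRotation_right hik, add_vecMul, smul_vecMul, dotProduct_sub]
  linear_combination (W i i - W k k) * hs + ((√2 : ℝ) : ℂ)⁻¹ ^ 2 * this

theorem integral_norm_sq_mul_transpose_offDiag [IsFiniteMeasure μ] [μ.IsMulLeftInvariant]
    {i k : n} (hik : i ≠ k) :
    ∫ U, ‖(U.1 * U.1ᵀ) i k‖ ^ 2 ∂μ =
      (∫ U, ‖(U.1 * U.1ᵀ) i i‖ ^ 2 ∂μ + ∫ U, ‖(U.1 * U.1ᵀ) k k‖ ^ 2 ∂μ) / 4 := by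
  rw [← integral_comp_mul_transpose_congruence μ (fun W => ‖W i k‖ ^ 2)
    (hadamardRotation_mem_unitaryGroup hik)]
  have hexp (U : unitaryGroup n ℂ) :
      ‖(hadamardRotation i k * (U.1 * U.1ᵀ) * (hadamardRotation i k)ᵀ) i k‖ ^ 2 =
        (‖(U.1 * U.1ᵀ) i i‖ ^ 2 + ‖(U.1 * U.1ᵀ) k k‖ ^ 2) / 4 -
          ((U.1 * U.1ᵀ) i i * star ((U.1 * U.1ᵀ) k k)).re / 2 := by
    rw [hadamardRotation_congruence_apply hik (isSymm_mul_transpose_self U.1)]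
    simp only [Complex.sq_norm, Complex.normSq_div, Complex.normSq_sub, RCLike.star_def]
    norm_num
    ring
  simp only [hexp]
  have hi := integrable_norm_sq_mul_transpose_entry μ i i
  have hk := integrable_norm_sq_mul_transpose_entry μ k k
  have hsum : Integrable
      (fun U => (‖(U.1 * U.1ᵀ) i i‖ ^ 2 + ‖(U.1 * U.1ᵀ) k k‖ ^ 2) / 4) μ :=
    (hi.add hk).div_const 4
  rw [integral_sub hsum ((integrable_re_mul_conj_mul_transpose_diag μ i k).div_const 2),
    integral_div, integral_div, integral_add hi hk,
    integral_re_mul_conj_mul_transpose_diag μ hik]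
  ring

theorem sum_integral_norm_sq_mul_transpose_diag [IsProbabilityMeasure μ] [μ.IsMulLeftInvariant] :
    ∑ i, ∫ U, ‖(U.1 * U.1ᵀ) i i‖ ^ 2 ∂μ =
      2 * (Fintype.card n : ℝ) / ((Fintype.card n : ℝ) + 1) := by
  have htotal : ∑ i, ∑ k, ∫ U, ‖(U.1 * U.1ᵀ) i k‖ ^ 2 ∂μ = Fintype.card n := by
    simp_rw [← integral_finsetSum _ fun k _ => integrable_norm_sq_mul_transpose_entry μ _ k]
    rw [← integral_finsetSum _ fun i _ => integrable_finsetSum _ fun k _ =>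
      integrable_norm_sq_mul_transpose_entry μ i k]
    simp [sum_norm_sq_entry_of_mem_unitaryGroup (mul_transpose_mem_unitaryGroup _)]
  set c : n → ℝ := fun i => ∫ U, ‖(U.1 * U.1ᵀ) i i‖ ^ 2 ∂μ with hc
  have hentry (i k : n) : ∫ U, ‖(U.1 * U.1ᵀ) i k‖ ^ 2 ∂μ =
      c i / 4 + c k / 4 + if i = k then c i / 2 else 0 := by
    split_ifs with hik
    · subst hik; simp only [hc]; ring
    · rw [integral_norm_sq_mul_transpose_offDiag μ hik]; simp only [hc]; ring
  simp only [hentry, Finset.sum_add_distrib, Finset.sum_const, Finset.card_univ, nsmul_eq_mul,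
    ← Finset.mul_sum, ← Finset.sum_div, Finset.sum_ite_eq, Finset.mem_univ, if_true] at htotal
  rw [eq_div_iff (by positivity)]
  linarith

theorem integral_norm_sq_trace_mul_transpose [IsFiniteMeasure μ] [μ.IsMulLeftInvariant] :
    ∫ U, ‖(U.1 * U.1ᵀ).trace‖ ^ 2 ∂μ = ∑ i, ∫ U, ‖(U.1 * U.1ᵀ) i i‖ ^ 2 ∂μ := by
  have hexp (U : unitaryGroup n ℂ) : ‖(U.1 * U.1ᵀ).trace‖ ^ 2 =
      ∑ i, ∑ k, ((U.1 * U.1ᵀ) i i * star ((U.1 * U.1ᵀ) k k)).re := by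
    simp only [← Complex.re_sum, ← Finset.mul_sum, ← Finset.sum_mul, ← star_sum]
    rw [RCLike.star_def, Complex.mul_conj', ← Complex.ofReal_pow, Complex.ofReal_re]
    rfl
  simp only [hexp]
  rw [integral_finsetSum _ fun i _ => integrable_finsetSum _ fun k _ =>
    integrable_re_mul_conj_mul_transpose_diag μ i k]
  refine Finset.sum_congr rfl fun i _ => ?_
  rw [integral_finsetSum _ fun k _ => integrable_re_mul_conj_mul_transpose_diag μ i k,
    Finset.sum_eq_single_of_mem i (Finset.mem_univ i) fun k _ hk =>
      integral_re_mul_conj_mul_transpose_diag μ hk.symm]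
  simp only [RCLike.star_def, Complex.mul_conj', ← Complex.ofReal_pow, Complex.ofReal_re]

end TransposeGram

/-- For every `D ≥ 1`, the Haar integral over the unitary group satisfies
`∫_{U(D)} |tr(U Uᵀ)|² dU = 2D/(D+1)`. -/
theorem haar_integral_abs_tr_U_Ut_sq :
    ∀ (D : ℕ), 1 ≤ D →
    ∀ (μ : Measure ↥(Matrix.unitaryGroup (Fin D) ℂ)),
      μ.IsHaarMeasure → IsProbabilityMeasure μ →
      ∫ U, ‖((U.1 * (U.1)ᵀ).trace)‖ ^ 2 ∂μ = 2 * (D : ℝ) / ((D : ℝ) + 1) := by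
  intro D _ μ _ _
  rw [integral_norm_sq_trace_mul_transpose, sum_integral_norm_sq_mul_transpose_diag,
    Fintype.card_fin]
end

section
/- For every even integer D ≥ 2, letting J denote the D×D block matrix [[0, I_{D/2}], [−I_{D/2}, 0]], the Haar integral over the unitary group satisfies ∫_{U(D)} |tr(U J Uᵀ J)|² dU = 2D/(D−1), where Uᵀ denotes the transpose of U (not the conjugate transpose) and tr is the matrix trace. -/
open MeasureTheory Matrix

/-- The `D×D` canonical symplectic form `J = [[0, I_{D/2}], [−I_{D/2}, 0]]`
(for `D` even), written entrywise. -/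
def Jmat (D : ℕ) : Matrix (Fin D) (Fin D) ℂ :=
  fun i j =>
    if (j : ℕ) = (i : ℕ) + D / 2 then 1
    else if (i : ℕ) = (j : ℕ) + D / 2 then -1
    else 0

instance inst_s11 {m n : Type*} [Countable m] [Countable n] : BorelSpace (Matrix m n ℂ) :=
  inferInstanceAs (BorelSpace (m → n → ℂ))

namespace HaarUnitary

lemma exists_perm_apply_eq_apply_eq {α : Type*} [DecidableEq α] {i j k l : α}
    (hij : i ≠ j) (hkl : k ≠ l) :
    ∃ σ : Equiv.Perm α, σ k = i ∧ σ l = j := by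
  refine ⟨Equiv.swap j (Equiv.swap i k l) * Equiv.swap i k, ?_, ?_⟩
  · rw [Equiv.Perm.mul_apply, Equiv.swap_apply_right]
    refine Equiv.swap_apply_of_ne_of_ne hij fun h => hkl ?_
    rw [← Equiv.swap_apply_right i k] at h
    exact (Equiv.swap i k).injective (by simpa using h)
  · rw [Equiv.Perm.mul_apply, Equiv.swap_apply_right]

variable {n : Type*} [Fintype n] [DecidableEq n]

/-- The congruence transform `U J Uᵀ` of `J` by a unitary matrix `U`. -/
def congruence (J : Matrix n n ℂ) (U : unitaryGroup n ℂ) : Matrix n n ℂ := U.1 * J * U.1ᵀ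

lemma congruence_mul (J : Matrix n n ℂ) (V U : unitaryGroup n ℂ) :
    congruence J (V * U) = V.1 * congruence J U * V.1ᵀ := by
  simp [congruence, Matrix.mul_assoc]

lemma congruence_swap {J : Matrix n n ℂ} (hJ : Jᵀ = -J) (U : unitaryGroup n ℂ) (i j : n) :
    congruence J U j i = -congruence J U i j := by
  have h : (congruence J U)ᵀ = -congruence J U := by
    simp [congruence, hJ, Matrix.mul_assoc]
  simpa using congrFun (congrFun h i) j

lemma congruence_diag {J : Matrix n n ℂ} (hJ : Jᵀ = -J) (U : unitaryGroup n ℂ) (i : n) :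
    congruence J U i i = 0 :=
  self_eq_neg.mp (congruence_swap hJ U i i)

lemma sum_congruence_mul_star {J : Matrix n n ℂ} (hJ : J * Jᴴ = 1) (U : unitaryGroup n ℂ) :
    ∑ i, ∑ j, congruence J U i j * star (congruence J U i j) = Fintype.card n := by
  have hU : U.1 * U.1ᴴ = 1 := mem_unitaryGroup_iff.mp U.2
  have hU' : U.1ᴴ * U.1 = 1 := mem_unitaryGroup_iff'.mp U.2
  have hT : U.1ᵀ * U.1ᵀᴴ = 1 := by
    rw [conjTranspose_transpose_eq_transpose_conjTranspose, ← transpose_mul, hU', transpose_one]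
  have h : congruence J U * (congruence J U)ᴴ = 1 := by
    calc congruence J U * (congruence J U)ᴴ
        = U.1 * (J * (U.1ᵀ * U.1ᵀᴴ) * Jᴴ) * U.1ᴴ := by
          simp only [congruence, conjTranspose_mul, Matrix.mul_assoc]
      _ = 1 := by rw [hT, Matrix.mul_one, hJ, Matrix.mul_one, hU]
  have := congrArg trace h
  simpa [trace, mul_apply, diag] using this

/-- The diagonal unitary matrix flipping the sign of the `a`-th coordinate. -/
def signFlip (a : n) : unitaryGroup n ℂ :=
  ⟨diagonal fun i => if i = a then -1 else 1, by
    rw [mem_unitaryGroup_iff, star_eq_conjTranspose, diagonal_conjTranspose,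
      diagonal_mul_diagonal, ← diagonal_one]
    congr 1
    ext i
    by_cases h : i = a <;> simp [h]⟩

lemma congruence_signFlip_mul (J : Matrix n n ℂ) (a : n) (U : unitaryGroup n ℂ) (i j : n) :
    congruence J (signFlip a * U) i j =
      (if i = a then -1 else 1) * congruence J U i j * (if j = a then -1 else 1) := by
  rw [congruence_mul]
  simp [signFlip, diagonal_transpose, mul_diagonal, diagonal_mul]

/-- The unitary permutation matrix of `σ`. -/
def permUnitary (σ : Equiv.Perm n) : unitaryGroup n ℂ :=
  ⟨(1 : Matrix n n ℂ).submatrix σ id, by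
    rw [mem_unitaryGroup_iff, star_eq_conjTranspose]
    ext i j
    simp [mul_apply, one_apply]⟩

lemma congruence_permUnitary_mul (J : Matrix n n ℂ) (σ : Equiv.Perm n) (U : unitaryGroup n ℂ)
    (i j : n) : congruence J (permUnitary σ * U) i j = congruence J U (σ i) (σ j) := by
  rw [congruence_mul]
  simp [permUnitary, mul_apply, one_apply]

lemma continuous_congruence (J : Matrix n n ℂ) : Continuous (congruence J) := by
  unfold congruence
  fun_prop

variable {μ : Measure (unitaryGroup n ℂ)}

lemma integral_congruence_mul_left [μ.IsMulLeftInvariant] (f : Matrix n n ℂ → ℂ)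
    (J : Matrix n n ℂ) (V : unitaryGroup n ℂ) :
    ∫ U, f (congruence J (V * U)) ∂μ = ∫ U, f (congruence J U) ∂μ :=
  integral_mul_left_eq_self (fun U => f (congruence J U)) V

lemma norm_congruence_sq_le {J : Matrix n n ℂ} (hJ : J * Jᴴ = 1) (U : unitaryGroup n ℂ) (i j : n) :
    ‖congruence J U i j‖ ^ 2 ≤ Fintype.card n := by
  have h : ∑ i, ∑ j, ‖congruence J U i j‖ ^ 2 = (Fintype.card n : ℝ) := by
    have := sum_congruence_mul_star hJ U
    simp only [Complex.star_def, Complex.mul_conj'] at this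
    exact_mod_cast this
  rw [← h]
  calc ‖congruence J U i j‖ ^ 2 ≤ ∑ j, ‖congruence J U i j‖ ^ 2 :=
        Finset.single_le_sum (f := fun j => ‖congruence J U i j‖ ^ 2) (fun _ _ => by positivity)
          (Finset.mem_univ j)
    _ ≤ _ := Finset.single_le_sum (f := fun i => ∑ j, ‖congruence J U i j‖ ^ 2)
          (fun _ _ => by positivity) (Finset.mem_univ i)

lemma integrable_congruence_mul_star [IsFiniteMeasure μ] {J : Matrix n n ℂ} (hJ : J * Jᴴ = 1)
    (i j k l : n) : Integrable (fun U => congruence J U i j * star (congruence J U k l)) μ := by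
  have hc := continuous_congruence J
  refine Integrable.of_bound (C := Fintype.card n) ?_ (.of_forall fun U => ?_)
  · exact Continuous.aestronglyMeasurable (by fun_prop)
  · rw [norm_mul, norm_star]
    nlinarith [norm_congruence_sq_le hJ U i j, norm_congruence_sq_le hJ U k l,
      sq_nonneg (‖congruence J U i j‖ - ‖congruence J U k l‖)]

lemma integral_congruence_mul_star_eq_zero [μ.IsMulLeftInvariant] (J : Matrix n n ℂ) {i j k l : n}
    (hij : i ≠ j) (hik : i ≠ k) (hil : i ≠ l) :
    ∫ U, congruence J U i j * star (congruence J U k l) ∂μ = 0 := by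
  have h := integral_congruence_mul_left (μ := μ) (fun A => A i j * star (A k l)) J (signFlip i)
  simp only [congruence_signFlip_mul, if_true, hij.symm, hik.symm, hil.symm, if_false, one_mul,
    mul_one, neg_mul, integral_neg] at h
  exact self_eq_neg.mp h.symm

lemma integral_congruence_mul_star_self [μ.IsMulLeftInvariant] [IsProbabilityMeasure μ]
    {J : Matrix n n ℂ} (hJ : Jᵀ = -J) (hJ' : J * Jᴴ = 1) {i j : n} (hij : i ≠ j) :
    ∫ U, congruence J U i j * star (congruence J U i j) ∂μ = 1 / ((Fintype.card n : ℂ) - 1) := by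
  set c := ∫ U, congruence J U i j * star (congruence J U i j) ∂μ with hc
  have hconst : ∀ k l, ∫ U, congruence J U k l * star (congruence J U k l) ∂μ =
      c - if k = l then c else 0 := by
    intro k l
    by_cases hkl : k = l
    · subst hkl
      simp [congruence_diag hJ]
    · obtain ⟨σ, rfl, rfl⟩ := exists_perm_apply_eq_apply_eq hij hkl
      have := integral_congruence_mul_left (μ := μ) (fun A => A k l * star (A k l)) J (permUnitary σ)
      simp only [congruence_permUnitary_mul] at this
      simp only [hkl, if_false, sub_zero, hc, this]
  have hsum : ∑ k, ∑ l, ∫ U, congruence J U k l * star (congruence J U k l) ∂μ =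
      (Fintype.card n : ℂ) := by
    simp_rw [← integral_finsetSum _ fun l _ => integrable_congruence_mul_star (μ := μ) hJ' _ l _ l]
    rw [← integral_finsetSum _ fun k _ => integrable_finsetSum _ fun l _ =>
      integrable_congruence_mul_star (μ := μ) hJ' k l k l]
    simp_rw [sum_congruence_mul_star hJ']
    simp
  simp only [hconst, Finset.sum_sub_distrib, Finset.sum_const, Finset.card_univ, nsmul_eq_mul,
    Finset.sum_ite_eq, Finset.mem_univ, if_true] at hsum
  have hcard : 1 < Fintype.card n := Fintype.one_lt_card_iff.mpr ⟨i, j, hij⟩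
  have h0 : (Fintype.card n : ℂ) ≠ 0 := by exact_mod_cast (by omega : Fintype.card n ≠ 0)
  have h1 : (Fintype.card n : ℂ) - 1 ≠ 0 :=
    sub_ne_zero.mpr (by exact_mod_cast hcard.ne')
  rw [eq_div_iff h1]
  apply mul_left_cancel₀ h0
  linear_combination hsum

lemma integral_congruence_mul_star [μ.IsMulLeftInvariant] [IsProbabilityMeasure μ]
    {J : Matrix n n ℂ} (hJ : Jᵀ = -J) (hJ' : J * Jᴴ = 1) (i j k l : n) :
    ∫ U, congruence J U i j * star (congruence J U k l) ∂μ =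
      ((if k = i then if l = j then 1 else 0 else 0) -
        (if l = i then if k = j then 1 else 0 else 0)) / ((Fintype.card n : ℂ) - 1) := by
  rcases eq_or_ne i j with rfl | hij
  · by_cases hk : k = i <;> by_cases hl : l = i <;> simp [congruence_diag hJ, hk, hl]
  by_cases hki : k = i
  · subst hki
    by_cases hlj : l = j
    · subst hlj
      rw [integral_congruence_mul_star_self hJ hJ' hij]
      simp [hij]
    · have := integral_congruence_mul_star_eq_zero (μ := μ) J hij.symm hij.symm (Ne.symm hlj)
      simp_rw [congruence_swap hJ _ k j, neg_mul, integral_neg, neg_eq_zero] at this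
      rw [this]
      simp [hlj, hij]
  · by_cases hli : l = i
    · subst hli
      simp_rw [congruence_swap hJ _ l k, star_neg, mul_neg, integral_neg]
      by_cases hkj : k = j
      · subst hkj
        rw [integral_congruence_mul_star_self hJ hJ' hij]
        simp [hki, neg_div]
      · have := integral_congruence_mul_star_eq_zero (μ := μ) J hij.symm hij.symm (Ne.symm hkj)
        simp_rw [congruence_swap hJ _ l j, neg_mul, integral_neg, neg_eq_zero] at this
        rw [this]
        simp [hki, hkj]
    · rw [integral_congruence_mul_star_eq_zero J hij (Ne.symm hki) (Ne.symm hli)]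
      simp [hki, hli]

/-- For a unitary antisymmetric `J`, the second moment of `tr (U J Uᵀ J)` under the Haar
probability measure is `2n / (n - 1)`. -/
theorem integral_norm_trace_sq [μ.IsMulLeftInvariant] [IsProbabilityMeasure μ]
    {J : Matrix n n ℂ} (hJ : Jᵀ = -J) (hJ' : J * Jᴴ = 1) :
    ∫ U, ‖(U.1 * J * U.1ᵀ * J).trace‖ ^ 2 ∂μ =
      2 * (Fintype.card n : ℝ) / ((Fintype.card n : ℝ) - 1) := by
  have hexp : ∀ U : unitaryGroup n ℂ, ((‖(U.1 * J * U.1ᵀ * J).trace‖ ^ 2 : ℝ) : ℂ) =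
      ∑ i, ∑ j, ∑ k, ∑ l, (congruence J U i j * star (congruence J U k l)) *
        (J j i * star (J l k)) := by
    intro U
    have ht : (U.1 * J * U.1ᵀ * J).trace = ∑ i, ∑ j, congruence J U i j * J j i := by
      simp [trace, mul_apply (N := J), congruence]
    rw [Complex.ofReal_pow, ← Complex.mul_conj', ht, ← Complex.star_def]
    simp_rw [star_sum, Finset.sum_mul, Finset.mul_sum, star_mul']
    refine Finset.sum_congr rfl fun i _ => Finset.sum_congr rfl fun j _ =>
      Finset.sum_congr rfl fun k _ => Finset.sum_congr rfl fun l _ => by ring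
  have hint (i j k l : n) := (integrable_congruence_mul_star (μ := μ) hJ' i j k l).mul_const
    (J j i * star (J l k))
  have hsum : ∑ i, ∑ j, J j i * star (J j i) = (Fintype.card n : ℂ) := by
    rw [Finset.sum_comm]
    simpa [trace, mul_apply, diag] using congrArg trace hJ'
  have hskew (i j : n) : J i j = -J j i := by
    simpa using congrFun (congrFun hJ j) i
  apply Complex.ofReal_injective
  rw [← integral_complex_ofReal]
  simp_rw [hexp]
  rw [integral_finsetSum _ fun i _ => integrable_finsetSum _ fun j _ =>
    integrable_finsetSum _ fun k _ => integrable_finsetSum _ fun l _ => hint i j k l]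
  simp_rw [integral_finsetSum _ fun j _ => integrable_finsetSum _ fun k _ =>
    integrable_finsetSum _ fun l _ => hint _ j k l,
    integral_finsetSum _ fun k _ => integrable_finsetSum _ fun l _ => hint _ _ k l,
    integral_finsetSum _ fun l _ => hint _ _ _ l, integral_mul_const,
    integral_congruence_mul_star hJ hJ']
  have hcontract (i j : n) : ∑ k, ∑ l,
      ((if k = i then if l = j then 1 else 0 else 0) -
        (if l = i then if k = j then 1 else 0 else 0)) / ((Fintype.card n : ℂ) - 1) *
          (J j i * star (J l k)) =
      2 / ((Fintype.card n : ℂ) - 1) * (J j i * star (J j i)) := by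
    simp only [sub_div, sub_mul, Finset.sum_sub_distrib, ite_div, ite_mul, zero_div, zero_mul,
      Finset.sum_ite_eq', Finset.mem_univ, if_true, Finset.sum_ite_irrel, Finset.sum_const_zero]
    rw [hskew i j, star_neg]
    ring
  simp_rw [hcontract, ← Finset.mul_sum, hsum]
  push_cast
  ring

end HaarUnitary

lemma Jmat_transpose (D : ℕ) (hD : 2 ≤ D) : (Jmat D)ᵀ = -Jmat D := by
  ext i j
  change Jmat D j i = -Jmat D i j
  simp only [Jmat]
  split_ifs <;> first | omega | simp

lemma Jmat_mul_conjTranspose (D : ℕ) (hD : 2 ≤ D) (he : Even D) :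
    Jmat D * (Jmat D)ᴴ = 1 := by
  obtain ⟨h, rfl⟩ := he
  have hh : (h + h) / 2 = h := by omega
  ext i k
  rw [mul_apply]
  obtain ⟨p, hp⟩ : ∃ p : Fin (h + h), (p : ℕ) = i + h ∨ (i : ℕ) = p + h := by
    by_cases hi : (i : ℕ) < h
    · exact ⟨⟨i + h, by omega⟩, Or.inl rfl⟩
    · exact ⟨⟨i - h, by omega⟩, Or.inr (by simp; omega)⟩
  rw [Finset.sum_eq_single p]
  · simp only [conjTranspose_apply, Jmat, hh, one_apply, Fin.ext_iff]
    split_ifs <;> first | omega | simp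
  · intro b _ hb
    have hb' : (b : ℕ) ≠ p := fun e => hb (Fin.ext e)
    have : Jmat (h + h) i b = 0 := by
      simp only [Jmat, hh]
      split_ifs <;> first | omega | rfl
    simp [this]
  · simp

/-- For every even `D ≥ 2`, the Haar integral over the unitary group
satisfies `∫_{U(D)} |tr(U J Uᵀ J)|² dU = 2D/(D−1)`. -/
theorem haar_integral_abs_tr_UJUtJ_sq :
    ∀ (D : ℕ), 2 ≤ D → Even D →
    ∀ (μ : Measure ↥(Matrix.unitaryGroup (Fin D) ℂ)),
      μ.IsHaarMeasure → IsProbabilityMeasure μ →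
      ∫ U, ‖((U.1 * Jmat D * (U.1)ᵀ * Jmat D).trace)‖ ^ 2 ∂μ
        = 2 * (D : ℝ) / ((D : ℝ) - 1) := by
  intro D hD he μ _ _
  simpa using HaarUnitary.integral_norm_trace_sq (μ := μ) (Jmat_transpose D hD)
    (Jmat_mul_conjTranspose D hD he)
end
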